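/- arXiv:1210.7708 — 4 statements merged into one kernel-verified Lean document; each statement's English description precedes it below -/
import Mathlib

section
/- Let n ≥ 3 and 1 ≤ k ≤ n-2, and let ω_k be the largest zero of T_n^{(k+1)}. Then for every x ∈ [0, ω_k], m_k(x, σ_n) ≤ (1/(1 − sin(π(k+1)/(2n))))^k · |T_n^{(k)}(ω_k)|. -/
open Polynomial Set

/-- `k`-th derivative of the Chebyshev polynomial `T_m`, evaluated at `x`. -/
noncomputable def chebDeriv (m : ℤ) (k : ℕ) (x : ℝ) : ℝ :=
  (derivative^[k] (Polynomial.Chebyshev.T ℝ m)).eval x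

/-- `σ_n = 2^(n-1) n! = T_n^{(n)}(1)`. -/
noncomputable def sigmaN (n : ℕ) : ℝ := 2 ^ (n - 1) * (n.factorial : ℝ)

/-- `f` is `n` times differentiable on the set `s`. -/
def NTimesDiffOn (n : ℕ) (f : ℝ → ℝ) (s : Set ℝ) : Prop :=
  ∀ i < n, DifferentiableOn ℝ (iteratedDerivWithin i f s) s

/-- The class `W^n_∞(σ)` on `[-1,1]`. -/
def memW (n : ℕ) (σ : ℝ) (f : ℝ → ℝ) : Prop :=
  NTimesDiffOn n f (Icc (-1:ℝ) 1) ∧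
  (∀ x ∈ Icc (-1:ℝ) 1, |f x| ≤ 1) ∧
  (∀ x ∈ Icc (-1:ℝ) 1, |iteratedDerivWithin n f (Icc (-1:ℝ) 1) x| ≤ σ)

/-- `m_k(x,σ) = sup { |f^{(k)}(x)| : f ∈ W^n_∞(σ) }`. -/
noncomputable def mval (n k : ℕ) (x σ : ℝ) : ℝ :=
  sSup {y | ∃ f : ℝ → ℝ, memW n σ f ∧
    y = |iteratedDerivWithin k f (Icc (-1:ℝ) 1) x|}

/-- `m_k^*(x,σ) = sup { |f^{(k)}(x)| : f ∈ W^n_∞(σ), f^{(k+1)}(x) = 0 }`. -/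
noncomputable def mstar (n k : ℕ) (x σ : ℝ) : ℝ :=
  sSup {y | ∃ f : ℝ → ℝ, memW n σ f ∧
    iteratedDerivWithin (k+1) f (Icc (-1:ℝ) 1) x = 0 ∧
    y = |iteratedDerivWithin k f (Icc (-1:ℝ) 1) x|}

/-- `μ_k(x₀)`: best constant in the pointwise Markov inequality. -/
noncomputable def muk (n k : ℕ) (x : ℝ) : ℝ :=
  sSup {y | ∃ p : Polynomial ℝ, p.natDegree ≤ n ∧
    (∀ t ∈ Icc (-1:ℝ) 1, |p.eval t| ≤ 1) ∧
    y = |(derivative^[k] p).eval x|}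

/-- `μ_k^*(x₀)`: best constant in the pointwise Schur-type inequality. -/
noncomputable def mukStar (n k : ℕ) (x : ℝ) : ℝ :=
  sSup {y | ∃ p : Polynomial ℝ, p.natDegree ≤ n ∧
    (∀ t ∈ Icc (-1:ℝ) 1, |p.eval t| ≤ 1) ∧
    (derivative^[k+1] p).eval x = 0 ∧
    y = |(derivative^[k] p).eval x|}


/-- `g 0, g 1, …, g m` are successive derivatives on `[-1,1]`. -/
def Fam (m : ℕ) (g : ℕ → ℝ → ℝ) : Prop :=
  ∀ i < m, ∀ x ∈ Icc (-1:ℝ) 1, HasDerivWithinAt (g i) (g (i+1) x) (Icc (-1:ℝ) 1) x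

theorem Fam.mvt {m : ℕ} {g : ℕ → ℝ → ℝ} (hg : Fam m g) {i : ℕ} (hi : i < m) {a b : ℝ}
    (ha : a ∈ Icc (-1:ℝ) 1) (hb : b ∈ Icc (-1:ℝ) 1) (hab : a < b) :
    ∃ ξ ∈ Ioo a b, g (i+1) ξ * (b - a) = g i b - g i a := by
  have hsub : Icc a b ⊆ Icc (-1:ℝ) 1 := Icc_subset_Icc ha.1 hb.2
  obtain ⟨ξ, hξ, h⟩ := exists_hasDerivAt_eq_slope (g i) (g (i+1)) hab
    (fun x hx => ((hg i hi x (hsub hx)).continuousWithinAt).mono hsub)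
    (fun x hx => (hg i hi x (hsub (Ioo_subset_Icc_self hx))).hasDerivAt
      (Icc_mem_nhds (lt_of_le_of_lt ha.1 hx.1) (lt_of_lt_of_le hx.2 hb.2)))
  refine ⟨ξ, hξ, ?_⟩
  rw [h]
  have : b - a ≠ 0 := by linarith
  field_simp

/-- `h` has strictly alternating signs on the first `N` points of an increasing sequence. -/
def Alt (N : ℕ) (s : ℝ) (h : ℝ → ℝ) : Prop :=
  ∃ z : ℕ → ℝ, (∀ i < N, z i ∈ Icc (-1:ℝ) 1) ∧ (∀ i, i + 1 < N → z i < z (i+1)) ∧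
    ∀ i < N, 0 < s * (-1) ^ i * h (z i)

theorem Fam.alt_step {m : ℕ} {g : ℕ → ℝ → ℝ} (hg : Fam m g) {j : ℕ} (hj : j < m) {N : ℕ} {s : ℝ}
    (h : Alt (N+1) s (g j)) : Alt N (-s) (g (j+1)) := by
  obtain ⟨z, hz1, hz2, hz3⟩ := h
  have key : ∀ i, ∃ ξ, i < N → ξ ∈ Ioo (z i) (z (i+1)) ∧
      g (j+1) ξ * (z (i+1) - z i) = g j (z (i+1)) - g j (z i) := by
    intro i
    by_cases hi : i < N
    · obtain ⟨ξ, h1, h2⟩ := hg.mvt hj (hz1 i (by omega)) (hz1 (i+1) (by omega)) (hz2 i (by omega))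
      exact ⟨ξ, fun _ => ⟨h1, h2⟩⟩
    · exact ⟨0, fun h => absurd h hi⟩
  choose ξ hξ using key
  refine ⟨ξ, fun i hi => ?_, fun i hi => ?_, fun i hi => ?_⟩
  · have h1 := (hξ i hi).1
    exact ⟨(hz1 i (by omega)).1.trans h1.1.le, h1.2.le.trans (hz1 (i+1) (by omega)).2⟩
  · exact (hξ i (by omega)).1.2.trans (hξ (i+1) (by omega)).1.1
  · obtain ⟨h1, h2⟩ := hξ i hi
    have p0 : 0 < z (i+1) - z i := sub_pos.2 (hz2 i (by omega))
    have a1 := hz3 i (by omega)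
    have a2 := hz3 (i+1) (by omega)
    have : 0 < (-s * (-1)^i * g (j+1) (ξ i)) * (z (i+1) - z i) := by
      have : (-s * (-1)^i * g (j+1) (ξ i)) * (z (i+1) - z i) =
        s * (-1)^(i+1) * g j (z (i+1)) + s * (-1)^i * g j (z i) := by
        rw [mul_assoc, h2]; ring
      rw [this]; linarith
    exact pos_of_mul_pos_left this p0.le

theorem Fam.alt {m : ℕ} {g : ℕ → ℝ → ℝ} (hg : Fam m g) {s : ℝ} {N : ℕ} (j : ℕ) (hj : j ≤ m)
    (h : Alt (N + j) s (g 0)) : ∃ s', Alt N s' (g j) := by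
  induction j generalizing N with
  | zero => exact ⟨s, h⟩
  | succ j ih =>
    obtain ⟨s', hs'⟩ := ih (N := N+1) (by omega) (by convert h using 1; omega)
    exact ⟨-s', hg.alt_step (by omega) hs'⟩

theorem Fam.rolle_step {m : ℕ} {g : ℕ → ℝ → ℝ} (hg : Fam m g) {j : ℕ} (hj : j < m) {N : ℕ}
    (S : Finset ℝ) (hS : ∀ x ∈ S, x ∈ Icc (-1:ℝ) 1 ∧ g j x = 0) (hc : S.card = N + 1) :
    ∃ S' : Finset ℝ, (∀ x ∈ S', (x ∈ Icc (-1:ℝ) 1 ∧ g (j+1) x = 0) ∧ x ∉ S) ∧ S'.card = N := by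
  classical
  let e := S.orderEmbOfFin hc
  have he : ∀ i, e i ∈ S := fun i => S.orderEmbOfFin_mem hc i
  have key : ∀ i : Fin N, ∃ ξ ∈ Ioo (e i.castSucc) (e i.succ), g (j+1) ξ = 0 := by
    intro i
    have hlt : e i.castSucc < e i.succ := e.strictMono i.castSucc_lt_succ
    obtain ⟨ξ, h1, h2⟩ := hg.mvt hj (hS _ (he i.castSucc)).1 (hS _ (he i.succ)).1 hlt
    rw [(hS _ (he i.castSucc)).2, (hS _ (he i.succ)).2, sub_zero, mul_eq_zero] at h2
    rcases h2 with h2 | h2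
    · exact ⟨ξ, h1, h2⟩
    · linarith
  choose ξ hξ1 hξ2 using key
  have hmono : StrictMono ξ := by
    intro a b hab
    have : e a.succ ≤ e b.castSucc := e.monotone (Fin.succ_le_castSucc_iff.2 hab)
    exact (hξ1 a).2.trans_le (this.trans (hξ1 b).1.le)
  refine ⟨Finset.univ.image ξ, ?_, ?_⟩
  · intro x hx
    simp only [Finset.mem_image, Finset.mem_univ, true_and] at hx
    obtain ⟨i, rfl⟩ := hx
    refine ⟨⟨⟨(hS _ (he i.castSucc)).1.1.trans (hξ1 i).1.le,
      (hξ1 i).2.le.trans (hS _ (he i.succ)).1.2⟩, hξ2 i⟩, fun hmem => ?_⟩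
    have : ξ i ∈ Set.range e := by
      rw [S.range_orderEmbOfFin hc]; exact hmem
    obtain ⟨l, hl⟩ := this
    have h1 : i.castSucc < l := e.lt_iff_lt.1 (hl ▸ (hξ1 i).1)
    have h2 : l < i.succ := e.lt_iff_lt.1 (hl ▸ (hξ1 i).2)
    simp only [Fin.lt_def, Fin.val_castSucc, Fin.val_succ] at h1 h2
    omega
  · rw [Finset.card_image_of_injective _ hmono.injective]; simp

theorem Fam.rolle {m : ℕ} {g : ℕ → ℝ → ℝ} (hg : Fam m g) (j d : ℕ) (hj : j + d ≤ m) 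
    (S : Finset ℝ) (hS : ∀ x ∈ S, x ∈ Icc (-1:ℝ) 1 ∧ g j x = 0) (hc : S.card = d + 1) :
    ∃ ξ ∈ Icc (-1:ℝ) 1, g (j+d) ξ = 0 := by
  induction d generalizing j S with
  | zero =>
    obtain ⟨x, hx⟩ := Finset.card_pos.1 (by omega : 0 < S.card)
    exact ⟨x, (hS x hx).1, (hS x hx).2⟩
  | succ d ih =>
    obtain ⟨S', h1, h2⟩ := hg.rolle_step (by omega) S hS hc
    obtain ⟨ξ, a, b⟩ := ih (j+1) (by omega) S' (fun x hx => (h1 x hx).1) h2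
    refine ⟨ξ, a, ?_⟩
    rw [← b]; congr 1; omega

theorem Fam.rolle_double {m : ℕ} {g : ℕ → ℝ → ℝ} (hg : Fam (m+1) g) 
    (S : Finset ℝ) (hS : ∀ x ∈ S, x ∈ Icc (-1:ℝ) 1 ∧ g 0 x = 0) (hc : S.card = m + 1)
    (ω : ℝ) (hω : ω ∈ S) (hω1 : g 1 ω = 0) : 
    ∃ ξ ∈ Icc (-1:ℝ) 1, g (m+1) ξ = 0 := by
  classical
  obtain ⟨S', h1, h2⟩ := hg.rolle_step (j := 0) (by omega) S hS hc
  have hn : ω ∉ S' := fun h => (h1 ω h).2 hω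
  obtain ⟨ξ, a, b⟩ := hg.rolle 1 m (by omega) (insert ω S') (by
    intro x hx
    rcases Finset.mem_insert.1 hx with rfl | hx
    · exact ⟨(hS _ hω).1, hω1⟩
    · exact (h1 x hx).1) (by rw [Finset.card_insert_of_notMem hn, h2])
  exact ⟨ξ, a, by rw [← b]; congr 1; omega⟩

theorem sign_prod {r : ℕ} {w : ℕ → ℝ} (hw : ∀ i, i < r → w i < w (i+1)) {i : ℕ} (hi : i ≤ r) :
    0 < (-1:ℝ) ^ (r - i) * ∏ j ∈ (Finset.range (r+1)).erase i, (w i - w j) := by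
  have hm : ∀ a b, b ≤ r → a < b → w a < w b := by
    intro a b hb hab
    induction b with
    | zero => omega
    | succ b ih =>
      rcases Nat.lt_succ_iff_lt_or_eq.1 hab with h | h
      · exact (ih (by omega) h).trans (hw b (by omega))
      · subst h; exact hw a (by omega)
  have hset : (Finset.range (r+1)).erase i = Finset.range i ∪ Finset.Ioc i r := by
    ext j; simp only [Finset.mem_erase, Finset.mem_range, Finset.mem_union, Finset.mem_Ioc]; omega
  have hdis : Disjoint (Finset.range i) (Finset.Ioc i r) := by
    rw [Finset.disjoint_left]; intro j; simp only [Finset.mem_range, Finset.mem_Ioc]; omega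
  rw [hset, Finset.prod_union hdis]
  have e : (-1:ℝ)^(r-i) * ∏ j ∈ Finset.Ioc i r, (w i - w j) = ∏ j ∈ Finset.Ioc i r, (w j - w i) := by
    have : (-1:ℝ)^(r-i) = ∏ j ∈ Finset.Ioc i r, (-1:ℝ) := by simp
    rw [this, ← Finset.prod_mul_distrib]
    exact Finset.prod_congr rfl fun j _ => by ring
  have p1 : 0 < ∏ j ∈ Finset.range i, (w i - w j) := Finset.prod_pos fun j hj => by
    have := hm j i hi (Finset.mem_range.1 hj); linarith
  have p2 : 0 < ∏ j ∈ Finset.Ioc i r, (w j - w i) := Finset.prod_pos fun j hj => by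
    have := hm i j (Finset.mem_Ioc.1 hj).2 (Finset.mem_Ioc.1 hj).1; linarith
  calc 0 < _ := mul_pos p1 p2
    _ = _ := by rw [← e]; ring

theorem Fam.hermite {r : ℕ} {g : ℕ → ℝ → ℝ} (hg : Fam (r+2) g) {ω s : ℝ} (hω : ω ∈ Icc (-1:ℝ) 1)
    (h0 : g 0 ω = 0) (h1 : g 1 ω = 0) (hA : Alt (r+1) s (g 0)) :
    ∃ ξ ∈ Icc (-1:ℝ) 1, 0 < s * (-1)^r * g (r+2) ξ := by
  classical
  obtain ⟨w, hw1, hw2, hw3⟩ := hA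
  have hm : ∀ a b, b ≤ r → a < b → w a < w b := by
    intro a b hb hab
    induction b with
    | zero => omega
    | succ b ih =>
      rcases Nat.lt_succ_iff_lt_or_eq.1 hab with h | h
      · exact (ih (by omega) h).trans (hw2 b (by omega))
      · subst h; exact hw2 a (by omega)
  have hinj : Set.InjOn w (Finset.range (r+1)) := by
    intro a ha b hb hab
    simp only [Finset.coe_range, Set.mem_Iio] at ha hb
    rcases lt_trichotomy a b with h | h | h
    · exact absurd hab (hm a b (by omega) h).ne
    · exact h
    · exact absurd hab (hm b a (by omega) h).ne'
  have hne : ∀ i < r+1, w i - ω ≠ 0 := by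
    intro i hi h
    have := hw3 i hi
    rw [sub_eq_zero.1 h, h0] at this
    simp at this
  set L : ℝ[X] := Lagrange.interpolate (Finset.range (r+1)) w (fun i => g 0 (w i) / (w i - ω)^2) with hL
  have hLd : L.degree < (Finset.range (r+1)).card := Lagrange.degree_interpolate_lt _ hinj
  have hLc : 0 < s * (-1)^r * L.coeff r := by
    have := Lagrange.coeff_eq_sum hinj hLd
    rw [Finset.card_range, Nat.add_sub_cancel] at this
    rw [this, Finset.mul_sum]
    refine Finset.sum_pos (fun i hi => ?_) (by simp)
    have hi' := Finset.mem_range.1 hi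
    rw [hL, Lagrange.eval_interpolate_at_node _ hinj hi]
    have sp := sign_prod (r := r) (w := w) (fun i hi => hw2 i (by omega)) (i := i) (by omega)
    set P := ∏ j ∈ (Finset.range (r+1)).erase i, (w i - w j) with hP
    have q := hw3 i hi'
    have e : (-1:ℝ)^r = (-1)^(r-i) * (-1)^i := by rw [← pow_add]; congr 1; omega
    have hP0 : P ≠ 0 := by rintro h; rw [h] at sp; simp at sp
    have e2 : ((-1:ℝ)^(r-i)) * ((-1:ℝ)^(r-i)) = 1 := by rw [← pow_add]; exact Even.neg_one_pow ⟨_, rfl⟩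
    have : s * (-1)^r * (g 0 (w i) / (w i - ω)^2 / P)
      = (s * (-1)^i * g 0 (w i)) / ((w i - ω)^2 * ((-1:ℝ)^(r-i) * P)) := by
      rw [e]
      have h3 : (-1:ℝ)^(r-i) ≠ 0 := by positivity
      have h4 := hne i hi'
      field_simp
      linear_combination (s * g 0 (w i)) * e2
    rw [this]
    have h4 := hne i hi'
    positivity
  set Φ : ℝ[X] := (X - C ω)^2 * L with hΦ
  have hLn : L.natDegree ≤ r := by
    rw [Finset.card_range] at hLd
    exact Nat.lt_succ_iff.1 (by
      rcases eq_or_ne L 0 with h | h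
      · simp [h]
      · exact (Polynomial.natDegree_lt_iff_degree_lt h).2 hLd)
  have hq : ((X - C ω)^2 : ℝ[X]).natDegree = 2 := by simp
  have hΦn : Φ.natDegree ≤ r + 2 := by
    refine Polynomial.natDegree_mul_le.trans ?_
    rw [hq]; omega
  have hΦc : Φ.coeff (r+2) = L.coeff r := by
    rw [hΦ, add_comm, Polynomial.coeff_mul_add_eq_of_natDegree_le hq.le hLn]
    have : ((X - C ω)^2 : ℝ[X]).coeff 2 = 1 := by
      have h := (Polynomial.monic_X_sub_C ω).pow 2
      rw [Polynomial.Monic, Polynomial.leadingCoeff, hq] at h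
      exact h
    rw [this, one_mul]
  have hΦd : ∀ x, (derivative^[r+2] Φ).eval x = (r+2).factorial * L.coeff r := by
    intro x
    have h0 : (derivative^[r+2] Φ).natDegree = 0 := by
      have := Polynomial.natDegree_iterate_derivative Φ (r+2)
      omega
    rw [Polynomial.eq_C_of_natDegree_eq_zero h0, eval_C, Polynomial.coeff_iterate_derivative, zero_add,
      hΦc, Nat.descFactorial_self, nsmul_eq_mul]
  let D : ℕ → ℝ → ℝ := fun i x => g i x - (derivative^[i] Φ).eval x
  have hD : Fam (r+1+1) D := by
    intro i hi x hx
    have a := hg i hi x hx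
    have b := ((derivative^[i] Φ).hasDerivAt x).hasDerivWithinAt (s := Icc (-1:ℝ) 1)
    have := a.fun_sub b
    simp only [D, Function.iterate_succ_apply']
    exact this
  have hωn : ω ∉ (Finset.range (r+1)).image w := by
    intro h
    obtain ⟨i, hi, h⟩ := Finset.mem_image.1 h
    exact hne i (Finset.mem_range.1 hi) (by rw [h]; ring)
  obtain ⟨ξ, hξ, hξ0⟩ := hD.rolle_double (insert ω ((Finset.range (r+1)).image w)) (by
    intro x hx
    rcases Finset.mem_insert.1 hx with rfl | hx
    · exact ⟨hω, by simp [D, h0, hΦ]⟩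
    · obtain ⟨i, hi, rfl⟩ := Finset.mem_image.1 hx
      refine ⟨hw1 i (Finset.mem_range.1 hi), ?_⟩
      have h4 := hne i (Finset.mem_range.1 hi)
      simp only [D, hΦ, Function.iterate_zero, id, eval_mul, eval_pow, eval_sub, eval_X, eval_C]
      rw [hL, Lagrange.eval_interpolate_at_node _ hinj hi]
      field_simp
      ring) (by
    rw [Finset.card_insert_of_notMem hωn, Finset.card_image_of_injOn hinj, Finset.card_range]) ω
    (Finset.mem_insert_self _ _) (by simp [D, h1, hΦ, derivative_mul, derivative_pow])
  refine ⟨ξ, hξ, ?_⟩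
  have hh : g (r+2) ξ = (r+2).factorial * L.coeff r := by
    have : D (r+1+1) ξ = g (r+2) ξ - (derivative^[r+2] Φ).eval ξ := rfl
    rw [hΦd, hξ0] at this
    linarith
  rw [hh]
  have : 0 < ((r+2).factorial : ℝ) := by positivity
  nlinarith [mul_pos this hLc]

/-- No double zero. -/
theorem Fam.no_double {m : ℕ} {g : ℕ → ℝ → ℝ} (hg : Fam (m+1) g) {ω s : ℝ}
    (hω : ω ∈ Icc (-1:ℝ) 1)
    (h0 : g 0 ω = 0) (h1 : g 1 ω = 0) (hA : Alt (m+1) s (g 0))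
    (hpos : ∀ x ∈ Icc (-1:ℝ) 1, 0 < g (m+1) x) : False := by
  rcases m with _ | r
  · have := hpos ω hω
    simp only [zero_add] at this
    linarith
  · obtain ⟨z, hz1, hz2, hz3⟩ := hA
    obtain ⟨ξ, hξ, h⟩ := hg.hermite (s := s) hω h0 h1
      ⟨z, fun i hi => hz1 i (by omega), fun i hi => hz2 i (by omega), fun i hi => hz3 i (by omega)⟩
    obtain ⟨ξ', hξ', h'⟩ := hg.hermite (s := -s) hω h0 h1
      ⟨fun i => z (i+1), fun i hi => hz1 (i+1) (by omega), fun i hi => hz2 (i+1) (by omega),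
        fun i hi => by have := hz3 (i+1) (by omega); rw [pow_succ] at this; linarith⟩
    have a := pos_of_mul_pos_left h (hpos ξ hξ).le
    have b := pos_of_mul_pos_left h' (hpos ξ' hξ').le
    linarith

/-- No double zero of an intermediate derivative. -/
theorem Fam.no_double' {n k : ℕ} {g : ℕ → ℝ → ℝ} (hk : k < n) (hg : Fam n g) {ω s : ℝ}
    (hω : ω ∈ Icc (-1:ℝ) 1)
    (h0 : g k ω = 0) (h1 : g (k+1) ω = 0) (hA : Alt n s (g 0))
    (hpos : ∀ x ∈ Icc (-1:ℝ) 1, 0 < g n x) : False := by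
  obtain ⟨m, rfl⟩ : ∃ m, n = m + 1 + k := ⟨n - k - 1, by omega⟩
  obtain ⟨s', hs'⟩ := hg.alt (N := m+1) k (by omega) hA
  have hF : Fam (m+1) (fun i => g (k + i)) := fun i hi x hx => hg (k+i) (by omega) x hx
  exact hF.no_double hω h0 h1 hs' (fun x hx => by have := hpos x hx; convert this using 2; omega)

open Polynomial.Chebyshev in
theorem cheb_hasDerivAt (n i : ℕ) (x : ℝ) :
    HasDerivAt (chebDeriv n i) (chebDeriv n (i+1) x) x := by
  have := (derivative^[i] (T ℝ (n:ℤ))).hasDerivAt x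
  simp only [chebDeriv, Function.iterate_succ_apply']
  exact this

open Polynomial.Chebyshev in
theorem cheb_top {n : ℕ} (_hn : 1 ≤ n) (x : ℝ) : chebDeriv n n x = sigmaN n := by
  have hd : (T ℝ (n:ℤ)).natDegree = n := by rw [natDegree_T]; simp
  have hl : (T ℝ (n:ℤ)).coeff n = 2^(n-1) := by
    have := leadingCoeff_T ℝ (n:ℤ)
    rw [leadingCoeff, hd] at this
    simpa using this
  have h0 : (derivative^[n] (T ℝ (n:ℤ))).natDegree = 0 := by
    have := Polynomial.natDegree_iterate_derivative (T ℝ (n:ℤ)) n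
    omega
  rw [chebDeriv, Polynomial.eq_C_of_natDegree_eq_zero h0, eval_C,
    Polynomial.coeff_iterate_derivative, zero_add, hl, Nat.descFactorial_self, nsmul_eq_mul, sigmaN]
  ring

theorem cheb_top_succ {n : ℕ} (hn : 1 ≤ n) (x : ℝ) : chebDeriv n (n+1) x = 0 := by
  have h := cheb_hasDerivAt n n x
  have : chebDeriv n n = fun _ => sigmaN n := funext (cheb_top hn)
  rw [this] at h
  exact h.unique (hasDerivAt_const _ _)

theorem sigmaN_pos (n : ℕ) : 0 < sigmaN n := by unfold sigmaN; positivity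

theorem cheb_neg (n i : ℕ) (x : ℝ) : chebDeriv n i (-x) = (-1)^(n+i) * chebDeriv n i x := by
  induction i generalizing x with
  | zero =>
    simp only [chebDeriv, Function.iterate_zero, id, Polynomial.Chebyshev.T_eval_neg]
    simp [Int.negOnePow]
  | succ i ih =>
    have h1 : HasDerivAt (fun y => chebDeriv n i (-y)) (-chebDeriv n (i+1) (-x)) x := by
      have := (cheb_hasDerivAt n i (-x)).comp x (hasDerivAt_neg x)
      simpa [Function.comp_def] using this
    have h2 := (cheb_hasDerivAt n i x).const_mul ((-1)^(n+i))
    have h3 : (fun y => chebDeriv n i (-y)) = fun y => (-1)^(n+i) * chebDeriv n i y := funext ih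
    rw [h3] at h1
    have := h1.unique h2
    rw [← add_assoc, pow_succ]
    linarith

theorem cheb_one_pos {n i : ℕ} (hi : i ≤ n) : 0 < chebDeriv n i 1 := by
  induction i with
  | zero => simp [chebDeriv]
  | succ i ih =>
    have := Polynomial.Chebyshev.iterate_derivative_T_eval_one_recurrence (R := ℝ) n i
    have h0 := ih (by omega)
    change (2 * (i:ℝ) + 1) * chebDeriv n (i+1) 1 = (((n:ℤ):ℝ)^2 - (i:ℝ)^2) * chebDeriv n i 1 at this
    have hlt : (i:ℝ) < n := by exact_mod_cast hi
    have h2 : 0 < ((n:ℤ):ℝ)^2 - (i:ℝ)^2 := by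
      push_cast
      have : (0:ℝ) ≤ i := by positivity
      nlinarith
    have h3 : 0 < (2 * (i:ℝ) + 1) * chebDeriv n (i+1) 1 := by rw [this]; positivity
    exact pos_of_mul_pos_right h3 (by positivity)

theorem cheb_ge_one_pos {n : ℕ} (hn : 1 ≤ n) {i : ℕ} (hi : i ≤ n) {x : ℝ} (hx : 1 ≤ x) :
    0 < chebDeriv n i x := by
  induction hi using Nat.decreasingInduction generalizing x with
  | self => rw [cheb_top hn]; exact sigmaN_pos n
  | of_succ i hi ih =>
    have hm : MonotoneOn (chebDeriv n i) (Ici 1) := by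
      apply monotoneOn_of_deriv_nonneg (convex_Ici 1)
      · exact fun y _ => (cheb_hasDerivAt n i y).continuousAt.continuousWithinAt
      · exact fun y _ => (cheb_hasDerivAt n i y).differentiableAt.differentiableWithinAt
      · intro y hy
        rw [interior_Ici] at hy
        rw [(cheb_hasDerivAt n i y).deriv]
        exact (ih (le_of_lt hy)).le
    exact (cheb_one_pos hi.le).trans_le (hm self_mem_Ici hx hx)

open Polynomial.Chebyshev in
theorem cheb_node {n l : ℕ} (hl : l ≤ n) : chebDeriv n 0 (node n l) = (-1)^l := by
  simpa [chebDeriv] using eval_T_real_node (n := n) (i := l) (by simpa using hl)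

open Polynomial.Chebyshev in
theorem cheb_one_node {n l : ℕ} (h0 : 0 < l) (hl : l < n) : chebDeriv n 1 (node n l) = 0 := by
  have hn : (n:ℝ) ≠ 0 := by have : 0 < n := by omega
                            positivity
  have h := U_real_cos (l * Real.pi / n) ((n:ℤ)-1)
  have e : ((((n:ℤ)-1 : ℤ) : ℝ) + 1) * (l * Real.pi / n) = l * Real.pi := by
    push_cast; field_simp; ring
  rw [e, Real.sin_nat_mul_pi] at h
  have hs : 0 < Real.sin (l * Real.pi / n) := by
    apply Real.sin_pos_of_pos_of_lt_pi
    · have : 0 < n := by omega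
      positivity
    · rw [div_lt_iff₀ (by positivity)]
      have : (l:ℝ) < n := by exact_mod_cast hl
      nlinarith [Real.pi_pos]
  have h' := (mul_eq_zero.1 h).resolve_right hs.ne'
  simp only [chebDeriv, Function.iterate_one, T_derivative_eq_U, node]
  simp [h']

theorem cheb_V {n k : ℕ} (hk : k < n) {a b : ℝ} (ha : 0 ≤ a) (hab : a ≤ b)
    (hza : chebDeriv n (k+1) a = 0) (hzb : chebDeriv n (k+1) b = 0) :
    |chebDeriv n k a| ≤ |chebDeriv n k b| := by
  set N : ℝ := (n:ℝ)^2 - (k:ℝ)^2 with hN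
  have hNpos : 0 < N := by
    have : (k:ℝ) < n := by exact_mod_cast hk
    have : (0:ℝ) ≤ k := by positivity
    rw [hN]; nlinarith
  let V : ℝ → ℝ := fun x => N * chebDeriv n k x ^ 2 + (1 - x^2) * chebDeriv n (k+1) x ^ 2
  have hV : ∀ x, HasDerivAt V (4 * k * x * chebDeriv n (k+1) x ^ 2) x := by
    intro x
    have h0 := (cheb_hasDerivAt n k x)
    have h1 := (cheb_hasDerivAt n (k+1) x)
    have hx : HasDerivAt (fun x:ℝ => 1 - x^2) (-(2*x)) x := by
      have := (hasDerivAt_pow 2 x).const_sub 1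
      simpa using this
    have ode := Polynomial.Chebyshev.one_sub_X_sq_mul_iterate_derivative_T_eval (R := ℝ) n k x
    change (1 - x^2) * chebDeriv n (k+2) x = (2*k+1) * x * chebDeriv n (k+1) x - (((n:ℤ):ℝ)^2 - (k:ℝ)^2) * chebDeriv n k x at ode
    have := ((h0.fun_pow 2).const_mul N).fun_add (hx.fun_mul (h1.fun_pow 2))
    refine this.congr_deriv ?_
    push_cast at ode
    rw [hN]
    simp only [Nat.add_one_sub_one, pow_one]
    push_cast
    linear_combination (2 * chebDeriv n (k+1) x) * ode
  have hm : MonotoneOn V (Ici 0) := by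
    apply monotoneOn_of_deriv_nonneg (convex_Ici 0)
    · exact fun y _ => (hV y).continuousAt.continuousWithinAt
    · exact fun y _ => (hV y).differentiableAt.differentiableWithinAt
    · intro y hy
      rw [interior_Ici] at hy
      rw [(hV y).deriv]
      have : 0 < y := hy
      positivity
  have h := hm (show (0:ℝ) ≤ a from ha) (show (0:ℝ) ≤ b from ha.trans hab) hab
  simp only [V, hza, hzb] at h
  apply sq_le_sq.1
  nlinarith

theorem cheb_V' {n k : ℕ} (hk : k < n) {a b : ℝ} (hb : IsGreatest {x : ℝ | chebDeriv n (k+1) x = 0} b)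
    (hza : chebDeriv n (k+1) a = 0) :
    |chebDeriv n k a| ≤ |chebDeriv n k b| := by
  rcases le_total 0 a with h | h
  · exact cheb_V hk h (hb.2 hza) hza hb.1
  · have hz : chebDeriv n (k+1) (-a) = 0 := by rw [cheb_neg, hza, mul_zero]
    have := cheb_V hk (neg_nonneg.2 h) (hb.2 hz) hz hb.1
    rw [cheb_neg, abs_mul, abs_pow, abs_neg, abs_one, one_pow, one_mul] at this
    exact this

open Polynomial.Chebyshev in
theorem cheb_zeros (n j : ℕ) : ∃ η : ℕ → ℝ, (∀ i, 1 ≤ i → i + j < n → 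
    chebDeriv n (j+1) (η i) = 0 ∧ node n (i+j) ≤ η i ∧ η i ≤ node n i) ∧
    (∀ i, 1 ≤ i → i + 1 + j < n → η (i+1) < η i) := by
  induction j with
  | zero =>
    exact ⟨node n, fun i h1 h2 => ⟨cheb_one_node h1 h2, le_rfl, le_rfl⟩,
      fun i h1 h2 => node_lt (by omega) (by omega)⟩
  | succ j ih =>
    obtain ⟨η, h1, h2⟩ := ih
    have key : ∀ i, ∃ ξ, 1 ≤ i → i + (j+1) < n → ξ ∈ Ioo (η (i+1)) (η i) ∧ chebDeriv n (j+1+1) ξ = 0 := by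
      intro i
      by_cases hi : 1 ≤ i ∧ i + (j+1) < n
      · obtain ⟨ξ, a, b⟩ := exists_hasDerivAt_eq_zero (f := chebDeriv n (j+1)) (f' := chebDeriv n (j+1+1))
          (h2 i hi.1 (by omega))
          (fun y _ => (cheb_hasDerivAt n (j+1) y).continuousAt.continuousWithinAt)
          (by rw [(h1 i hi.1 (by omega)).1, (h1 (i+1) (by omega) (by omega)).1])
          (fun y _ => cheb_hasDerivAt n (j+1) y)
        exact ⟨ξ, fun _ _ => ⟨a, b⟩⟩
      · exact ⟨0, fun a b => absurd ⟨a, b⟩ hi⟩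
    choose ξ hξ using key
    refine ⟨ξ, fun i a b => ?_, fun i a b => ?_⟩
    · obtain ⟨c, d⟩ := hξ i a b
      refine ⟨d, ?_, c.2.le.trans (h1 i a (by omega)).2.2⟩
      have := (h1 (i+1) (by omega) (by omega)).2.1
      rw [show i + 1 + j = i + (j+1) by omega] at this
      exact this.trans c.1.le
    · exact (hξ (i+1) (by omega) (by omega)).1.2.trans (hξ i a (by omega)).1.1

open Polynomial.Chebyshev in
theorem node_gap {n i k : ℕ} (hn : 1 ≤ n) (h : i + k + 1 ≤ n) :
    node n i - node n (i+k+1) ≤ 2 * Real.sin (Real.pi * ((k:ℝ) + 1) / (2 * (n:ℝ))) := by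
  have hs : 0 ≤ Real.sin (Real.pi * ((k:ℝ) + 1) / (2 * (n:ℝ))) := by
    apply Real.sin_nonneg_of_nonneg_of_le_pi
    · positivity
    · rw [div_le_iff₀ (by positivity)]
      have : (k:ℝ) + 1 ≤ n := by exact_mod_cast (by omega : k + 1 ≤ n)
      nlinarith [Real.pi_pos]
  rw [node, node, Real.cos_sub_cos]
  have hn' : (n:ℝ) ≠ 0 := by positivity
  have e : ((i:ℝ) * Real.pi / n - ((i+k+1:ℕ):ℝ) * Real.pi / n) / 2 = - (Real.pi * ((k:ℝ) + 1) / (2 * (n:ℝ))) := by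
    push_cast; field_simp; ring
  rw [e, Real.sin_neg]
  nlinarith [Real.sin_le_one ((↑i * Real.pi / ↑n + ↑(i + k + 1) * Real.pi / ↑n) / 2)]

open Polynomial.Chebyshev in
theorem bracket {n k : ℕ} (hk2 : k + 2 ≤ n) {ωk : ℝ}
    (hω : IsGreatest {x : ℝ | chebDeriv n (k+1) x = 0} ωk) {x : ℝ} (hx : x ∈ Icc (0:ℝ) ωk) :
    ∃ a b, chebDeriv n (k+1) a = 0 ∧ chebDeriv n (k+1) b = 0 ∧ a ≤ x ∧ x ≤ b ∧ 
      -1 ≤ a ∧ b < 1 ∧ b - a ≤ 2 * Real.sin (Real.pi * ((k:ℝ) + 1) / (2 * (n:ℝ))) := by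
  have hlt : ∀ y, chebDeriv n (k+1) y = 0 → y < 1 := by
    intro y hy
    by_contra h
    exact (cheb_ge_one_pos (n := n) (by omega) (i := k+1) (by omega) (not_lt.1 h)).ne' hy
  obtain ⟨η, h1, -⟩ := cheb_zeros n k
  have hω0 : chebDeriv n (k+1) ωk = 0 := hω.1
  have hω0' : chebDeriv n (k+1) (-ωk) = 0 := by rw [cheb_neg, hω0, mul_zero]
  have hω1 := hlt _ hω0
  let ζ : ℕ → ℝ := fun i => if i = 0 then ωk else if i + k < n then η i else -ωk
  have hz : ∀ i, chebDeriv n (k+1) (ζ i) = 0 := by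
    intro i
    simp only [ζ]
    split_ifs with a b
    · exact hω0
    · exact (h1 i (by omega) b).1
    · exact hω0'
  have hup : ∀ i, i + k < n → ζ i ≤ node n i := by
    intro i hi
    simp only [ζ]
    split_ifs with a
    · rw [a, node_eq_one]; exact hω1.le
    · exact (h1 i (by omega) hi).2.2
  have hlow : ∀ i, i + k < n → node n (i+k+1) ≤ ζ (i+1) := by
    intro i hi
    have hne : i + 1 ≠ 0 := by omega
    simp only [ζ]
    rw [if_neg hne]
    split_ifs with b
    · have := (h1 (i+1) (by omega) b).2.1
      rwa [show i + 1 + k = i + k + 1 by omega] at this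
    · rw [show i + k + 1 = n by omega, node_eq_neg_one (by omega)]; linarith
  have hex : ∃ i, ζ i < x ∨ n ≤ i + k := ⟨n, Or.inr (by omega)⟩
  classical
  have hf := Nat.find_spec hex
  have hmin := fun m => Nat.find_min hex (m := m)
  set p := Nat.find hex
  have hp0 : p ≠ 0 := by
    intro h
    rw [h] at hf
    rcases hf with hf | hf
    · simp only [ζ, if_true] at hf
      linarith [hx.2]
    · omega
  obtain ⟨i, hi⟩ := Nat.exists_eq_succ_of_ne_zero hp0
  have hm := hmin i (by omega)
  push Not at hm
  have hle : ζ (i+1) ≤ x := by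
    rw [hi] at hf
    rcases hf with hf | hf
    · exact hf.le
    · have : ζ (i+1) = -ωk := by simp only [ζ]; rw [if_neg (by omega), if_neg (by simp only [Nat.succ_eq_add_one] at hf; omega)]
      rw [this]; linarith [hx.1, hx.2]
  have l1 := hup i hm.2
  have l2 := hlow i hm.2
  refine ⟨ζ (i+1), ζ i, hz _, hz _, hle, hm.1, ?_, hlt _ (hz _), ?_⟩
  · exact (node_mem_Icc (n := n) (i := i+k+1)).1.trans l2
  · have := node_gap (n := n) (i := i) (k := k) (by omega) (by omega)
    linarith

/-- Derivatives of the rescaled Chebyshev polynomial. -/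
noncomputable def qf (n : ℕ) (l c : ℝ) (i : ℕ) (x : ℝ) : ℝ :=
  l⁻¹ ^ i * chebDeriv n i ((x - c) * l⁻¹)

theorem qf_hasDerivAt (n : ℕ) (l c : ℝ) (i : ℕ) (x : ℝ) :
    HasDerivAt (qf n l c i) (qf n l c (i+1) x) x := by
  have h1 : HasDerivAt (fun x : ℝ => (x - c) * l⁻¹) l⁻¹ x := by
    simpa using ((hasDerivAt_id x).sub_const c).mul_const l⁻¹
  have h2 := ((cheb_hasDerivAt n i ((x - c) * l⁻¹)).comp x h1).const_mul (l⁻¹ ^ i)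
  refine h2.congr_deriv ?_
  rw [qf]; ring

noncomputable def gf (n : ℕ) (l c θ μ : ℝ) (f : ℝ → ℝ) (i : ℕ) (x : ℝ) : ℝ :=
  qf n l c i x - θ * iteratedDerivWithin i f (Icc (-1:ℝ) 1) x + μ * qf n l c (i+1) x

theorem gf_fam {n : ℕ} {σ : ℝ} (l c θ μ : ℝ) {f : ℝ → ℝ} (hf : memW n σ f) :
    Fam n (gf n l c θ μ f) := by
  intro i hi x hx
  have h1 : HasDerivWithinAt (iteratedDerivWithin i f (Icc (-1:ℝ) 1))
      (iteratedDerivWithin (i+1) f (Icc (-1:ℝ) 1) x) (Icc (-1:ℝ) 1) x := by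
    rw [iteratedDerivWithin_succ]
    exact (hf.1 i hi x hx).hasDerivWithinAt
  exact ((qf_hasDerivAt n l c i x).hasDerivWithinAt.fun_sub (h1.const_mul θ)).fun_add
    ((qf_hasDerivAt n l c (i+1) x).hasDerivWithinAt.const_mul μ)

open Polynomial.Chebyshev in
theorem gf_sign {n : ℕ} (hn : 1 ≤ n) {σ l c θ μ : ℝ} {f : ℝ → ℝ} (hf : memW n σ f)
    (hl0 : 0 < l) (hlc : |c| ≤ 1 - l) (hθ : |θ| < 1) {p : ℕ} (hp : p ≤ n)
    (h0 : p = 0 → 0 ≤ μ) (h1 : p = n → μ ≤ 0) :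
    l * node n p + c ∈ Icc (-1:ℝ) 1 ∧ 0 < (-1)^p * gf n l c θ μ f 0 (l * node n p + c) := by
  have hc := abs_le.1 hlc
  have hnode := node_mem_Icc (n := n) (i := p)
  have hmem : l * node n p + c ∈ Icc (-1:ℝ) 1 :=
    ⟨by nlinarith [hnode.1], by nlinarith [hnode.2]⟩
  refine ⟨hmem, ?_⟩
  have e : (l * node n p + c - c) * l⁻¹ = node n p := by field_simp; ring
  have hsq : ((-1:ℝ)^p) * (-1)^p = 1 := by rw [← pow_add]; exact Even.neg_one_pow ⟨_, rfl⟩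
  have hfz := hf.2.1 _ hmem
  have ht : 0 ≤ (-1)^p * (μ * chebDeriv n 1 (node n p)) := by
    rcases Nat.eq_zero_or_pos p with h | h
    · subst h
      rw [node_eq_one]
      have := cheb_one_pos (n := n) (i := 1) hn
      have := h0 rfl
      simp; positivity
    · rcases Nat.lt_or_eq_of_le hp with h' | h'
      · rw [cheb_one_node h h']; simp
      · have hμ := h1 h'
        rw [h', node_eq_neg_one (by omega), cheb_neg, pow_succ]
        have := cheb_one_pos (n := n) (i := 1) hn
        rw [h'] at hsq
        have e3 : (-1:ℝ)^n * (μ * ((-1)^n * -1 * chebDeriv n 1 1)) = -μ * chebDeriv n 1 1 := by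
          linear_combination (-μ * chebDeriv n 1 1) * hsq
        rw [e3]
        nlinarith
  have hb : |(-1)^p * (θ * f (l * node n p + c))| < 1 := by
    rw [abs_mul, abs_pow, abs_neg, abs_one, one_pow, one_mul, abs_mul]
    nlinarith [abs_nonneg θ, abs_nonneg (f (l * node n p + c))]
  have hb' := (abs_lt.1 hb).2
  simp only [gf, qf, e, iteratedDerivWithin_zero, pow_zero, one_mul, zero_add, pow_one, cheb_node hp]
  have e4 : (-1:ℝ) ^ p * ((-1) ^ p - θ * f (l * node n p + c) + μ * (l⁻¹ * chebDeriv n 1 (node n p)))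
    = 1 - (-1)^p * (θ * f (l * node n p + c)) + l⁻¹ * ((-1)^p * (μ * chebDeriv n 1 (node n p))) := by
    linear_combination hsq
  have : 0 ≤ l⁻¹ * ((-1)^p * (μ * chebDeriv n 1 (node n p))) := by positivity
  rw [e4]
  linarith

open Polynomial.Chebyshev in
theorem gf_alt {n : ℕ} (hn : 1 ≤ n) {σ l c θ μ : ℝ} {f : ℝ → ℝ} (hf : memW n σ f)
    (hl0 : 0 < l) (hlc : |c| ≤ 1 - l) (hθ : |θ| < 1) : ∃ s, Alt n s (gf n l c θ μ f 0) := by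
  have hmono : ∀ i j, j ≤ n → i < j → l * node n j + c < l * node n i + c := by
    intro i j hj hij
    have := node_lt hj hij
    nlinarith
  rcases le_total 0 μ with hμ | hμ
  · refine ⟨(-1)^(n-1), fun i => l * node n (n - 1 - i) + c, fun i hi => ?_, fun i hi => ?_, fun i hi => ?_⟩
    · exact (gf_sign hn hf hl0 hlc hθ (p := n-1-i) (by omega) (fun _ => hμ) (fun h => by omega)).1
    · exact hmono _ _ (by omega) (by omega)
    · have := (gf_sign hn hf hl0 hlc hθ (p := n-1-i) (by omega) (fun _ => hμ) (fun h => by omega)).2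
      have e : (-1:ℝ)^(n-1) * (-1)^i = (-1)^(n-1-i) := by
        rw [show n - 1 = n - 1 - i + i by omega, pow_add, mul_assoc, ← pow_add,
          Even.neg_one_pow ⟨i, rfl⟩, mul_one, show n - 1 - i + i - i = n - 1 - i by omega]
      rw [e]; exact this
  · refine ⟨(-1)^n, fun i => l * node n (n - i) + c, fun i hi => ?_, fun i hi => ?_, fun i hi => ?_⟩
    · exact (gf_sign hn hf hl0 hlc hθ (p := n-i) (by omega) (fun h => by omega) (fun _ => hμ)).1
    · exact hmono _ _ (by omega) (by omega)
    · have := (gf_sign hn hf hl0 hlc hθ (p := n-i) (by omega) (fun h => by omega) (fun _ => hμ)).2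
      have e : (-1:ℝ)^n * (-1)^i = (-1)^(n-i) := by
        nth_rewrite 1 [show n = n - i + i by omega]
        rw [pow_add, mul_assoc, ← pow_add, Even.neg_one_pow ⟨i, rfl⟩, mul_one]
      rw [e]; exact this

theorem gf_pos {n : ℕ} (hn : 1 ≤ n) {l c θ μ : ℝ} {f : ℝ → ℝ} (hf : memW n (sigmaN n) f)
    (hl0 : 0 < l) (hl1 : l ≤ 1) (hθ : |θ| < 1) {x : ℝ} (hx : x ∈ Icc (-1:ℝ) 1) :
    0 < gf n l c θ μ f n x := by
  have h1 := hf.2.2 x hx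
  have hs := sigmaN_pos n
  have hp : 1 ≤ l⁻¹ ^ n := one_le_pow₀ ((one_le_inv₀ hl0).2 hl1)
  have hb : |θ * iteratedDerivWithin n f (Icc (-1:ℝ) 1) x| < sigmaN n := by
    rw [abs_mul]
    nlinarith [abs_nonneg θ, abs_nonneg (iteratedDerivWithin n f (Icc (-1:ℝ) 1) x)]
  have hb' := (abs_lt.1 hb).2
  simp only [gf, qf, cheb_top hn, cheb_top_succ hn, mul_zero, add_zero]
  nlinarith

theorem gf_no_double {n k : ℕ} (hk : k < n) {l c θ μ : ℝ} {f : ℝ → ℝ} (hf : memW n (sigmaN n) f)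
    (hl0 : 0 < l) (hl1 : l ≤ 1) (hlc : |c| ≤ 1 - l) (hθ : |θ| < 1) {x : ℝ} (hx : x ∈ Icc (-1:ℝ) 1)
    (h0 : gf n l c θ μ f k x = 0) (h1 : gf n l c θ μ f (k+1) x = 0) : False := by
  obtain ⟨s, hs⟩ := gf_alt (μ := μ) (by omega : 1 ≤ n) hf hl0 hlc hθ
  exact (gf_fam l c θ μ hf).no_double' hk hx h0 h1 hs
    (fun y hy => gf_pos (by omega) hf hl0 hl1 hθ hy)

/-- Pointwise comparison at a critical point of the (rescaled) Chebyshev derivative. -/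
theorem cheb_compare {n k : ℕ} (hk : k + 2 ≤ n) {l c : ℝ} {f : ℝ → ℝ} (hf : memW n (sigmaN n) f)
    (hl0 : 0 < l) (hl1 : l ≤ 1) (hlc : |c| ≤ 1 - l) {x : ℝ} (hx : x ∈ Icc (-1:ℝ) 1)
    (hz : qf n l c (k+1) x = 0) :
    |iteratedDerivWithin k f (Icc (-1:ℝ) 1) x| ≤ |qf n l c k x| := by
  by_contra hlt
  rw [not_le] at hlt
  have hf0 : iteratedDerivWithin k f (Icc (-1:ℝ) 1) x ≠ 0 := by
    intro h; rw [h, abs_zero] at hlt; exact absurd hlt (not_lt.2 (abs_nonneg _))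
  have hq2 : qf n l c (k+2) x ≠ 0 := by
    intro h
    refine gf_no_double (k := k+1) (θ := 0) (μ := 0) (by omega) hf hl0 hl1 hlc (by simp) hx ?_ ?_
    · simp [gf, hz]
    · simp [gf, h]
  set F0 := iteratedDerivWithin k f (Icc (-1:ℝ) 1) x with hF0
  set F1 := iteratedDerivWithin (k+1) f (Icc (-1:ℝ) 1) x with hF1
  set θ := qf n l c k x / F0 with hθd
  have hθ : |θ| < 1 := by
    rw [hθd, abs_div, div_lt_one (abs_pos.2 hf0)]; exact hlt
  refine gf_no_double (k := k) (θ := θ) (μ := θ * F1 / qf n l c (k+2) x)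
    (by omega) hf hl0 hl1 hlc hθ hx ?_ ?_
  · simp only [gf, hz, mul_zero, add_zero, ← hF0]
    rw [hθd]; field_simp; ring
  · simp only [gf, hz, ← hF1]
    rw [show k + 1 + 1 = k + 2 from rfl]
    field_simp; ring

/-- Comparison in unscaled terms. -/
theorem cheb_compare_unscaled {n k : ℕ} (hk : k + 2 ≤ n) {l c w : ℝ} {f : ℝ → ℝ} (hf : memW n (sigmaN n) f)
    (hl0 : 0 < l) (hl1 : l ≤ 1) (hlc : |c| ≤ 1 - l) {x : ℝ} (hx : x ∈ Icc (-1:ℝ) 1)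
    (hxw : x = l * w + c) (hz : chebDeriv n (k+1) w = 0) :
    |iteratedDerivWithin k f (Icc (-1:ℝ) 1) x| ≤ l⁻¹ ^ k * |chebDeriv n k w| := by
  have e : (x - c) * l⁻¹ = w := by rw [hxw]; field_simp; ring
  have := cheb_compare hk hf hl0 hl1 hlc hx (by rw [qf, e, hz, mul_zero])
  rw [qf, e, abs_mul, abs_of_pos (by positivity : 0 < l⁻¹ ^ k)] at this
  exact this

/-- upper bound for `m_k(x,σ_n)` on `[0, ω_k]`. -/
theorem mval_upper_bound_interior_sigmaN (n k : ℕ) (hn : 3 ≤ n) (hk1 : 1 ≤ k)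
    (hk2 : k ≤ n - 2)
    (ωk : ℝ) (hω : IsGreatest {x : ℝ | chebDeriv n (k+1) x = 0} ωk) :
    ∀ x ∈ Icc (0:ℝ) ωk,
      mval n k x (sigmaN n) ≤
        (1 / (1 - Real.sin (Real.pi * ((k:ℝ) + 1) / (2 * (n:ℝ))))) ^ k *
          |chebDeriv n k ωk| := by
  intro x hx
  obtain ⟨a, b, ha, hb, hax, hxb, ha1, hb1, hgap⟩ := bracket (by omega : k + 2 ≤ n) hω hx
  set s := Real.sin (Real.pi * ((k:ℝ) + 1) / (2 * (n:ℝ))) with hs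
  have hnR : (0:ℝ) < n := by exact_mod_cast (by omega : 0 < n)
  have hkn : (k:ℝ) + 1 < n := by exact_mod_cast (by omega : k + 1 < n)
  have hang : Real.pi * ((k:ℝ) + 1) / (2 * (n:ℝ)) < Real.pi / 2 := by
    rw [div_lt_iff₀ (by positivity)]
    nlinarith [Real.pi_pos]
  have hs1 : s < 1 := by
    refine lt_of_lt_of_eq ?_ Real.sin_pi_div_two
    exact Real.sin_lt_sin_of_lt_of_le_pi_div_two
      (by have : 0 ≤ Real.pi * ((k:ℝ) + 1) / (2 * (n:ℝ)) := by positivity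
          linarith [Real.pi_pos]) le_rfl hang
  have hx0 := hx.1
  have hxI : x ∈ Icc (-1:ℝ) 1 := ⟨by linarith, by linarith⟩
  -- a good rescaling
  have hscale : ∃ l c w : ℝ, 1 - s ≤ l ∧ l ≤ 1 ∧ |c| ≤ 1 - l ∧ x = l * w + c ∧
      chebDeriv n (k+1) w = 0 := by
    have hb0 : 0 < 1 + b := by linarith
    have ha0 : 0 < 1 - a := by linarith
    by_cases hcase : 1 - s ≤ (1 + x) / (1 + b)
    · have hle : (1 + x) / (1 + b) ≤ 1 := (div_le_one hb0).2 (by linarith)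
      refine ⟨(1 + x) / (1 + b), -(1 - (1 + x) / (1 + b)), b, hcase, hle, ?_, ?_, hb⟩
      · rw [abs_neg, abs_of_nonneg (by linarith)]
      · field_simp; ring
    · have hle : (1 - x) / (1 - a) ≤ 1 := (div_le_one ha0).2 (by linarith)
      refine ⟨(1 - x) / (1 - a), 1 - (1 - x) / (1 - a), a, ?_, hle, ?_, ?_, ha⟩
      · rw [not_le, div_lt_iff₀ hb0] at hcase
        rw [le_div_iff₀ ha0]
        nlinarith [sq_nonneg s]
      · rw [abs_of_nonneg (by linarith)]
      · field_simp; ring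
  obtain ⟨l, c, w, hsl, hl1, hlc, hxw, hw⟩ := hscale
  have hl0 : 0 < l := by linarith
  have hbound : ∀ y ∈ {y | ∃ f : ℝ → ℝ, memW n (sigmaN n) f ∧
      y = |iteratedDerivWithin k f (Icc (-1:ℝ) 1) x|}, y ≤ (1 / (1 - s)) ^ k * |chebDeriv n k ωk| := by
    rintro y ⟨f, hf, rfl⟩
    refine (cheb_compare_unscaled (by omega : k + 2 ≤ n) hf hl0 hl1 hlc hxI hxw hw).trans ?_
    have h1 : l⁻¹ ≤ 1 / (1 - s) := by
      rw [one_div]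
      exact inv_anti₀ (by linarith) hsl
    have h2 := cheb_V' (by omega : k < n) hω hw
    have h3 : 0 ≤ l⁻¹ := by positivity
    gcongr
  refine Real.sSup_le hbound ?_
  have : 0 < 1 - s := by linarith
  positivity
end

section
/- Let n ≥ 4 and let ω₁ be the largest zero of T_n''. Then for every x ∈ [0, ω₁], m_1(x, σ_n) ≤ (1/2)·T_n'(1); that is, every f : ℝ → ℝ that is n times differentiable on [-1,1] with |f| ≤ 1 and |f^{(n)}| ≤ σ_n on [-1,1] satisfies |f'(x)| ≤ (1/2)·T_n'(1) for all x ∈ [0, ω₁]. -/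
open Polynomial Set

/-- A family of successive derivatives on `[-1,1]`. -/
def DFam (n : ℕ) (F : ℕ → ℝ → ℝ) : Prop :=
  ∀ i < n, ∀ t ∈ Icc (-1:ℝ) 1, HasDerivWithinAt (F i) (F (i+1) t) (Icc (-1:ℝ) 1) t

lemma rolle_step (g g' : ℝ → ℝ)
    (hg : ∀ t ∈ Icc (-1:ℝ) 1, HasDerivWithinAt g (g' t) (Icc (-1:ℝ) 1) t)
    (Z : Finset ℝ) (hZ : ∀ z ∈ Z, z ∈ Icc (-1:ℝ) 1 ∧ g z = 0) :
    ∃ Z' : Finset ℝ, (∀ z ∈ Z', z ∈ Icc (-1:ℝ) 1 ∧ g' z = 0 ∧ z ∉ Z) ∧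
      Z.card ≤ Z'.card + 1 := by
  have key : ∀ x y : ℝ, ∃ c : ℝ, x ∈ Z → y ∈ Z → x < y → (x < c ∧ c < y ∧ g' c = 0) := by
    intro x y
    by_cases h : x ∈ Z ∧ y ∈ Z ∧ x < y
    · obtain ⟨hx, hy, hxy⟩ := h
      have hx1 := (hZ x hx).1
      have hy1 := (hZ y hy).1
      have hsub : Icc x y ⊆ Icc (-1:ℝ) 1 := Icc_subset_Icc hx1.1 hy1.2
      obtain ⟨c, hc, hc0⟩ := exists_hasDerivAt_eq_zero (f := g) (f' := g') hxy
        (fun t ht => ((hg t (hsub ht)).continuousWithinAt).mono hsub)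
        (by rw [(hZ x hx).2, (hZ y hy).2])
        (fun t ht => (hg t (hsub (Ioo_subset_Icc_self ht))).hasDerivAt
          (Icc_mem_nhds (lt_of_le_of_lt hx1.1 ht.1) (lt_of_lt_of_le ht.2 hy1.2)))
      exact ⟨c, fun _ _ _ => ⟨hc.1, hc.2, hc0⟩⟩
    · exact ⟨0, fun hx hy hxy => absurd ⟨hx, hy, hxy⟩ h⟩
  choose c hc using key
  classical
  let S : Finset ℝ := ((Z ×ˢ Z).filter (fun p => p.1 < p.2)).image (fun p => c p.1 p.2)
  refine ⟨S \ Z, ?_, ?_⟩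
  · intro z hz
    rw [Finset.mem_sdiff] at hz
    obtain ⟨hzS, hzZ⟩ := hz
    obtain ⟨p, hp, rfl⟩ := Finset.mem_image.mp hzS
    rw [Finset.mem_filter, Finset.mem_product] at hp
    obtain ⟨h1, h2, h3⟩ := hc p.1 p.2 hp.1.1 hp.1.2 hp.2
    have a := (hZ _ hp.1.1).1.1
    have b := (hZ _ hp.1.2).1.2
    exact ⟨⟨by linarith, by linarith⟩, h3, hzZ⟩
  · apply Finset.card_le_sdiff_of_interleaved
    intro x hx y hy hxy _
    obtain ⟨h1, h2, h3⟩ := hc x y hx hy hxy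
    refine ⟨c x y, ?_, h1, h2⟩
    exact Finset.mem_image.mpr ⟨(x, y), by simp [hx, hy, hxy], rfl⟩

lemma rolle_iter (n : ℕ) (F : ℕ → ℝ → ℝ) (hF : DFam n F) (m : ℕ) :
    ∀ (k : ℕ) (Z : Finset ℝ), k + m ≤ n → m + 1 ≤ Z.card →
      (∀ z ∈ Z, z ∈ Icc (-1:ℝ) 1 ∧ F k z = 0) → ∃ ξ ∈ Icc (-1:ℝ) 1, F (k + m) ξ = 0 := by
  induction m with
  | zero =>
    intro k Z _ hc hZ
    obtain ⟨z, hz⟩ := Finset.card_pos.mp (by omega : 0 < Z.card)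
    exact ⟨z, (hZ z hz).1, by simpa using (hZ z hz).2⟩
  | succ m ih =>
    intro k Z hk hc hZ
    obtain ⟨Z', hZ', hcard⟩ := rolle_step (F k) (F (k+1)) (hF k (by omega)) Z hZ
    obtain ⟨ξ, h1, h2⟩ := ih (k+1) Z' (by omega) (by omega)
      (fun z hz => ⟨(hZ' z hz).1, (hZ' z hz).2.1⟩)
    exact ⟨ξ, h1, by rw [← h2]; congr 1; omega⟩

lemma iterD_eval (n : ℕ) (p : ℝ[X]) (hp : p.natDegree ≤ n) (t : ℝ) :
    (derivative^[n] p).eval t = n.factorial * p.coeff n := by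
  have h : (derivative^[n] p).natDegree = 0 := by
    have := natDegree_iterate_derivative p n
    omega
  rw [eq_C_of_natDegree_eq_zero h, eval_C, coeff_iterate_derivative]
  simp [Nat.descFactorial_self]

lemma dfam_poly (n : ℕ) (p : ℝ[X]) : DFam n (fun i t => (derivative^[i] p).eval t) := by
  intro i _ t _
  simp only [Function.iterate_succ_apply']
  exact ((derivative^[i] p).hasDerivAt t).hasDerivWithinAt

section cheb

variable (n : ℕ)

lemma ode (t : ℝ) : (1 - t^2) * (derivative (derivative (Chebyshev.T ℝ (n:ℤ)))).eval t
    = t * (derivative (Chebyshev.T ℝ (n:ℤ))).eval t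
      - (n:ℝ)^2 * (Chebyshev.T ℝ (n:ℤ)).eval t := by
  have h := congrArg (eval t)
    (Chebyshev.one_sub_X_sq_mul_derivative_derivative_T_eq_poly_in_T (R := ℝ) (n:ℤ))
  simpa using h

lemma dT_cos (θ : ℝ) : (derivative (Chebyshev.T ℝ (n:ℤ))).eval (Real.cos θ) * Real.sin θ
    = n * Real.sin (n * θ) := by
  rw [Chebyshev.T_derivative_eq_U]
  have h := Chebyshev.U_real_cos θ ((n:ℤ) - 1)
  push_cast at h
  rw [sub_add_cancel] at h
  simp only [eval_mul, eval_natCast, Int.cast_natCast]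
  rw [mul_assoc, h]

lemma pyth (t : ℝ) (ht : t ∈ Icc (-1:ℝ) 1) :
    (1 - t^2) * (derivative (Chebyshev.T ℝ (n:ℤ))).eval t ^ 2
      = (n:ℝ)^2 * (1 - (Chebyshev.T ℝ (n:ℤ)).eval t ^ 2) := by
  have hc := Real.cos_arccos ht.1 ht.2
  set θ := Real.arccos t
  have h1 := dT_cos n θ
  have h2 := Chebyshev.T_real_cos θ (n:ℤ)
  rw [hc] at h1 h2
  rw [h2]
  have h3 := Real.sin_sq_add_cos_sq θ
  have h4 := Real.sin_sq_add_cos_sq (n * θ)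
  rw [hc] at h3
  push_cast
  have : 1 - t^2 = Real.sin θ ^ 2 := by linarith
  rw [this, ← mul_pow, mul_comm, h1]
  have : 1 - Real.cos (n * θ)^2 = Real.sin (n*θ) ^ 2 := by linarith
  rw [this]; ring

lemma U_mono (t : ℝ) (ht : 1 ≤ t) (k : ℕ) :
    0 < (Chebyshev.U ℝ (k:ℤ)).eval t ∧
    (Chebyshev.U ℝ (k:ℤ)).eval t ≤ (Chebyshev.U ℝ ((k:ℤ)+1)).eval t ∧
    0 ≤ (derivative (Chebyshev.U ℝ (k:ℤ))).eval t ∧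
    (derivative (Chebyshev.U ℝ (k:ℤ))).eval t <
      (derivative (Chebyshev.U ℝ ((k:ℤ)+1))).eval t := by
  induction k with
  | zero =>
    simp
    linarith
  | succ k ih =>
    obtain ⟨h1, h2, h3, h4⟩ := ih
    have e : ((k+1 : ℕ) : ℤ) = (k:ℤ) + 1 := by push_cast; ring
    have e2 : ((k:ℤ) + 1 + 1) = (k:ℤ) + 2 := by ring
    rw [e, e2, Chebyshev.U_add_two]
    simp only [eval_sub, eval_mul, eval_ofNat, eval_X, derivative_sub, derivative_mul,
      derivative_ofNat, derivative_X, zero_mul, zero_add, mul_one, eval_add]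
    refine ⟨by linarith, ?_, by linarith, ?_⟩
    · nlinarith
    · nlinarith

lemma ddT_pos (hn : 2 ≤ n) (t : ℝ) (ht : 1 ≤ t) :
    0 < (derivative (derivative (Chebyshev.T ℝ (n:ℤ)))).eval t := by
  obtain ⟨k, rfl⟩ : ∃ k, n = k + 2 := ⟨n - 2, by omega⟩
  have h := U_mono t ht k
  rw [Chebyshev.T_derivative_eq_U]
  have e : ((k+2 : ℕ) : ℤ) - 1 = (k:ℤ) + 1 := by push_cast; ring
  rw [e]
  have : 0 < (derivative (Chebyshev.U ℝ ((k:ℤ)+1))).eval t := by linarith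
  simp
  positivity

end cheb

lemma theta_bound (n : ℕ) (hn : 4 ≤ n) (θ : ℝ) (h0 : 0 < θ) (h1 : θ ≤ Real.pi / 2)
    (he : Real.cos θ * Real.sin (n * θ) = n * Real.sin θ * Real.cos (n * θ)) :
    4 * Real.pi / 3 ≤ n * θ := by
  by_contra! hlt
  have hpi := Real.pi_gt_three
  have hn' : (4:ℝ) ≤ n := by exact_mod_cast hn
  rcases le_or_gt ((n:ℝ) * θ) Real.pi with hu | hu
  · let g : ℝ → ℝ := fun s => Real.sin (n * s) * Real.cos s - n * (Real.cos (n * s) * Real.sin s)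
    have hd : ∀ s, HasDerivAt g (((n:ℝ)^2 - 1) * (Real.sin (n * s) * Real.sin s)) s := by
      intro s
      have a : HasDerivAt (fun s : ℝ => (n:ℝ) * s) n s := by
        simpa using (hasDerivAt_id s).const_mul (n:ℝ)
      have b := (a.sin.mul (Real.hasDerivAt_cos s)).sub
        ((a.cos.mul (Real.hasDerivAt_sin s)).const_mul (n:ℝ))
      refine HasDerivAt.congr_deriv (f := g) b ?_
      ring
    have hmono : StrictMonoOn g (Icc 0 θ) := by
      apply strictMonoOn_of_deriv_pos (convex_Icc _ _)
      · exact fun s _ => (hd s).continuousAt.continuousWithinAt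
      · intro s hs
        rw [interior_Icc] at hs
        rw [(hd s).deriv]
        have p1 : 0 < Real.sin s := Real.sin_pos_of_pos_of_lt_pi hs.1 (by linarith [hs.2])
        have p2 : 0 < Real.sin (n * s) := by
          apply Real.sin_pos_of_pos_of_lt_pi
          · have := hs.1; positivity
          · have : (n:ℝ) * s < n * θ := by
              apply mul_lt_mul_of_pos_left hs.2; linarith
            linarith
        have : 0 < (n:ℝ)^2 - 1 := by nlinarith
        positivity
    have := hmono (left_mem_Icc.mpr h0.le) (right_mem_Icc.mpr h0.le) h0
    simp only [g, mul_zero, Real.sin_zero, zero_mul, sub_zero] at this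
    linarith
  · obtain ⟨v, hv⟩ : ∃ v, (n:ℝ) * θ = v + Real.pi := ⟨n * θ - Real.pi, by ring⟩
    rw [hv, Real.sin_add_pi, Real.cos_add_pi] at he
    have v0 : 0 < v := by linarith
    have v1 : v < Real.pi / 3 := by linarith
    have c1 : 1 / 2 < Real.cos v := by
      rw [← Real.cos_pi_div_three]
      exact Real.cos_lt_cos_of_nonneg_of_le_pi v0.le (by linarith) v1
    have s1 := Real.sin_le_one v
    have hs : 0 < Real.sin θ := Real.sin_pos_of_pos_of_lt_pi h0 (by linarith)
    rcases h1.lt_or_eq with h1 | h1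
    · have hc : 0 < Real.cos θ := Real.cos_pos_of_mem_Ioo ⟨by linarith, h1⟩
      have ht := Real.lt_tan h0 h1
      rw [Real.tan_eq_sin_div_cos, lt_div_iff₀ hc] at ht
      have q1 : Real.pi * Real.cos θ < n * Real.sin θ := by
        have : (n:ℝ) * (θ * Real.cos θ) < n * Real.sin θ := by
          apply mul_lt_mul_of_pos_left ht; linarith
        nlinarith
      have q2 : Real.cos θ * Real.sin v ≤ Real.cos θ * 1 := by gcongr
      have q3 : (Real.pi * Real.cos θ) * Real.cos v < (n * Real.sin θ) * Real.cos v := by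
        apply mul_lt_mul_of_pos_right q1; linarith
      nlinarith [mul_pos hc (show 0 < Real.pi - 2 by linarith), mul_pos hc (sub_pos.mpr c1),
        mul_pos (mul_pos hc (show 0 < Real.pi - 2 by linarith)) (show 0 < Real.cos v by linarith)]
    · rw [h1, Real.cos_pi_div_two, Real.sin_pi_div_two] at he
      nlinarith

lemma omega_bound (n : ℕ) (hn : 4 ≤ n) (w : ℝ) (hw0 : 0 ≤ w)
    (hw : (derivative (derivative (Chebyshev.T ℝ (n:ℤ)))).eval w = 0) :
    w < 1 ∧ 15 / 2 ≤ (n:ℝ)^2 * (1 - w) := by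
  have hn' : (4:ℝ) ≤ n := by exact_mod_cast hn
  have hw1 : w < 1 := by
    by_contra! h
    exact absurd hw (ddT_pos n (by omega) w h).ne'
  refine ⟨hw1, ?_⟩
  have hc := Real.cos_arccos (by linarith : -1 ≤ w) hw1.le
  have h0 : 0 < Real.arccos w := Real.arccos_pos.mpr hw1
  have h1 : Real.arccos w ≤ Real.pi / 2 := Real.arccos_le_pi_div_two.mpr hw0
  set θ := Real.arccos w
  have e1 := dT_cos n θ
  have e2 := Chebyshev.T_real_cos θ (n:ℤ)
  have e3 := ode n w
  rw [hc] at e1 e2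
  rw [hw, e2] at e3
  push_cast at e3
  have he : Real.cos θ * Real.sin (n * θ) = n * Real.sin θ * Real.cos (n * θ) := by
    rw [hc]
    have : (n:ℝ) * (w * Real.sin (n * θ)) = n * (n * Real.sin θ * Real.cos (n * θ)) := by
      linear_combination -w * e1 - Real.sin θ * e3
    exact mul_left_cancel₀ (by positivity) this
  have hb := theta_bound n hn θ h0 h1 he
  have hpi := Real.pi_gt_d2
  -- the comparison angle
  have hy : 209 / 100 / (n:ℝ) ≤ θ / 2 := by
    rw [div_le_iff₀ (by positivity)]
    linarith
  set y : ℝ := 209 / 100 / (n:ℝ) with hydef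
  have hy0 : 0 < y := by positivity
  have hny : (n:ℝ) * y = 209 / 100 := by rw [hydef]; field_simp
  have hy1 : y ≤ 209 / 400 := by
    nlinarith
  have s1 : y - y^3 / 6 < Real.sin y := Real.sin_gt_sub_cube hy0
  have s2 : Real.sin y ≤ Real.sin (θ / 2) :=
    Real.sin_le_sin_of_le_of_le_pi_div_two (by linarith) (by linarith) hy
  have hw2 : 1 - w = 2 * Real.sin (θ / 2) ^ 2 := by
    rw [← hc, Real.sin_sq_eq_half_sub, mul_div_cancel₀ θ (two_ne_zero)]
    ring
  have s3 : y * (1 - (209/400)^2/6) ≤ Real.sin (θ / 2) := by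
    have : y^2 ≤ (209/400)^2 := by gcongr
    nlinarith
  have s4 : (n:ℝ) * (y * (1 - (209/400)^2/6)) ≤ n * Real.sin (θ/2) := by gcongr
  rw [← mul_assoc, hny] at s4
  rw [hw2]
  nlinarith

/-- Cardinal functions: Lagrange basis at the zeros of `T_n'`, evaluated through `T_n'`. -/
lemma basis_exists (n : ℕ) (hn : 4 ≤ n) :
    ∃ (Z : Finset ℝ) (l : ℝ → ℝ[X]), Z.card = n - 1 ∧
      (∀ z ∈ Z, z ∈ Icc (-1:ℝ) 1 ∧ (derivative (Chebyshev.T ℝ (n:ℤ))).eval z = 0) ∧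
      (∀ z ∈ Z, (l z).natDegree ≤ n - 2 ∧
        (X - C z) * l z * C ((derivative (derivative (Chebyshev.T ℝ (n:ℤ)))).eval z)
          = derivative (Chebyshev.T ℝ (n:ℤ))) := by
  obtain ⟨k, rfl⟩ : ∃ k, n = k + 1 := ⟨n - 1, by omega⟩
  have hU : derivative (Chebyshev.T ℝ ((k+1 : ℕ):ℤ)) = C ((k:ℝ)+1) * Chebyshev.U ℝ (k:ℤ) := by
    rw [Chebyshev.T_derivative_eq_U]
    congr 1
    · simp
    · congr 1; push_cast; ring
  let Z : Finset ℝ := (Finset.range k).image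
    (fun j : ℕ => Real.cos ((j + 1) * Real.pi / (k + 1)))
  have hr : (Chebyshev.U ℝ (k:ℤ)).roots = Z.val := Chebyshev.roots_U_real k
  have hcard : Z.card = k := by
    rw [Finset.card_image_of_injOn, Finset.card_range]
    exact (Finset.range k).nodup_map_iff_injOn.mp (Chebyshev.roots_U_real_nodup k)
  have hZ : ∀ z ∈ Z, z ∈ Icc (-1:ℝ) 1 ∧
      (derivative (Chebyshev.T ℝ ((k+1 : ℕ):ℤ))).eval z = 0 := by
    intro z hz
    constructor
    · obtain ⟨j, _, rfl⟩ := Finset.mem_image.mp hz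
      exact ⟨Real.neg_one_le_cos _, Real.cos_le_one _⟩
    · have : z ∈ (Chebyshev.U ℝ (k:ℤ)).roots := by rw [hr]; exact hz
      have := (mem_roots'.mp this).2
      rw [hU, eval_mul, this.eq_zero, mul_zero]
  refine ⟨Z, fun z => C (((derivative (derivative (Chebyshev.T ℝ ((k+1 : ℕ):ℤ)))).eval z)⁻¹) *
    (derivative (Chebyshev.T ℝ ((k+1 : ℕ):ℤ)) /ₘ (X - C z)), by simpa using hcard, hZ, ?_⟩
  intro z hz
  obtain ⟨hzI, hz0⟩ := hZ z hz
  constructor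
  · refine (natDegree_C_mul_le _ _).trans ?_
    rw [natDegree_divByMonic _ (monic_X_sub_C z), natDegree_X_sub_C]
    have := natDegree_derivative_le (Chebyshev.T ℝ ((k+1 : ℕ):ℤ))
    rw [Chebyshev.natDegree_T] at this
    simp only [Int.natAbs_natCast] at this
    omega
  · have hne : (derivative (derivative (Chebyshev.T ℝ ((k+1 : ℕ):ℤ)))).eval z ≠ 0 := by
      intro h
      have a := ode (k+1) z
      have b := pyth (k+1) z hzI
      rw [h, hz0] at a
      rw [hz0] at b
      have hk : (((k+1 : ℕ):ℝ))^2 ≠ 0 := by positivity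
      have c : (Chebyshev.T ℝ ((k+1 : ℕ):ℤ)).eval z = 0 := by
        have : (((k+1 : ℕ):ℝ))^2 * (Chebyshev.T ℝ ((k+1 : ℕ):ℤ)).eval z = 0 := by linarith
        exact (mul_eq_zero.mp this).resolve_left hk
      rw [c] at b
      apply hk
      linarith
    have e := mul_divByMonic_eq_iff_isRoot.mpr (show IsRoot _ z from hz0)
    calc _ = (C (((derivative (derivative (Chebyshev.T ℝ ((k+1 : ℕ):ℤ)))).eval z)⁻¹) *
          C ((derivative (derivative (Chebyshev.T ℝ ((k+1 : ℕ):ℤ)))).eval z)) *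
          ((X - C z) * (derivative (Chebyshev.T ℝ ((k+1 : ℕ):ℤ)) /ₘ (X - C z))) := by ring
      _ = _ := by rw [e, ← C_mul, inv_mul_cancel₀ hne, C_1, one_mul]

/-- The interpolatory formula for the derivative at a zero `w` of `T_n''`. -/
lemma err_formula (n : ℕ) (hn : 4 ≤ n) (w : ℝ) (hw : w ∈ Icc (-1:ℝ) 1)
    (Z : Finset ℝ) (l : ℝ → ℝ[X]) (hcard : Z.card = n - 1)
    (hZ : ∀ z ∈ Z, z ∈ Icc (-1:ℝ) 1 ∧ (derivative (Chebyshev.T ℝ (n:ℤ))).eval z = 0)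
    (hl : ∀ z ∈ Z, (l z).natDegree ≤ n - 2)
    (hl1 : ∀ z ∈ Z, ∀ y ∈ Z, (l z).eval y = if y = z then 1 else 0)
    (hw1 : (derivative (Chebyshev.T ℝ (n:ℤ))).eval w ≠ 0)
    (hw2 : (derivative (derivative (Chebyshev.T ℝ (n:ℤ)))).eval w = 0)
    (F : ℕ → ℝ → ℝ) (hF : DFam n F) :
    ∃ ξ ∈ Icc (-1:ℝ) 1, F 1 w - ∑ z ∈ Z, F 0 z * (derivative (l z)).eval w =
      F n ξ / (n * sigmaN n) * (derivative (Chebyshev.T ℝ (n:ℤ))).eval w := by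
  set D := derivative (Chebyshev.T ℝ (n:ℤ)) with hD
  set P : ℝ[X] := ∑ z ∈ Z, C (F 0 z) * l z with hP
  have hPdeg : P.natDegree ≤ n - 2 := by
    apply natDegree_sum_le_of_forall_le
    intro z hz
    exact (natDegree_C_mul_le _ _).trans (hl z hz)
  have hPnode : ∀ y ∈ Z, P.eval y = F 0 y := by
    intro y hy
    rw [hP, eval_finsetSum]
    rw [Finset.sum_eq_single y]
    · simp [hl1 y hy y hy]
    · intro z hz hzy
      simp [hl1 z hz y hy, hzy.symm]
    · intro h; exact absurd hy h
  have hPder : (derivative P).eval w = ∑ z ∈ Z, F 0 z * (derivative (l z)).eval w := by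
    rw [hP, derivative_sum, eval_finsetSum]
    apply Finset.sum_congr rfl
    intro z _
    simp
  set c : ℝ := (F 0 w - P.eval w) / D.eval w with hc
  set c2 : ℝ := (F 1 w - (derivative P).eval w) / D.eval w with hc2
  set Q : ℝ[X] := P + C c * D + C c2 * ((X - C w) * D) with hQ
  have hTdeg : (Chebyshev.T ℝ (n:ℤ)).natDegree = n := by simp
  have hDdeg : D.natDegree ≤ n - 1 := by
    have := natDegree_derivative_le (Chebyshev.T ℝ (n:ℤ))
    rwa [hTdeg] at this
  have hDc : D.coeff (n-1) = n * 2^(n-1) := by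
    rw [hD, coeff_derivative]
    have h1 : n - 1 + 1 = n := by omega
    have h2 : (Chebyshev.T ℝ (n:ℤ)).coeff n = 2^(n-1) := by
      have := Chebyshev.leadingCoeff_T ℝ (n:ℤ)
      rw [leadingCoeff, hTdeg] at this
      simpa using this
    rw [h1, h2]
    have : ((n-1 : ℕ):ℝ) + 1 = n := by exact_mod_cast h1
    rw [this]; ring
  have hQdeg : Q.natDegree ≤ n := by
    refine natDegree_add_le_of_degree_le (natDegree_add_le_of_degree_le ?_ ?_) ?_
    · omega
    · exact (natDegree_C_mul_le _ _).trans (by omega)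
    · refine (natDegree_C_mul_le _ _).trans (natDegree_mul_le.trans ?_)
      rw [natDegree_X_sub_C]; omega
  have hQc : Q.coeff n = c2 * (n * 2^(n-1)) := by
    rw [hQ, coeff_add, coeff_add, coeff_C_mul, coeff_C_mul,
      coeff_eq_zero_of_natDegree_lt (show P.natDegree < n by omega),
      coeff_eq_zero_of_natDegree_lt (show D.natDegree < n by omega)]
    have h1 : n = n - 1 + 1 := by omega
    have : ((X - C w) * D).coeff n = D.coeff (n-1) := by
      rw [sub_mul, coeff_sub, coeff_C_mul,
        coeff_eq_zero_of_natDegree_lt (show D.natDegree < n by omega)]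
      conv_lhs => rw [h1]
      rw [coeff_X_mul]; ring
    rw [this, hDc]; ring
  let G : ℕ → ℝ → ℝ := fun i t => F i t - (derivative^[i] Q).eval t
  have hG : DFam n G := fun i hi t ht => (hF i hi t ht).sub (dfam_poly n Q i hi t ht)
  have hwZ : w ∉ Z := fun h => hw1 (hZ w h).2
  have hG0 : ∀ z ∈ insert w Z, z ∈ Icc (-1:ℝ) 1 ∧ G 0 z = 0 := by
    intro z hz
    rcases Finset.mem_insert.mp hz with rfl | hz
    · refine ⟨hw, ?_⟩
      simp only [G, hQ, Function.iterate_zero, id, eval_add, eval_mul, eval_C, eval_sub, eval_X]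
      rw [hc]; field_simp; ring
    · refine ⟨(hZ z hz).1, ?_⟩
      simp only [G, hQ, Function.iterate_zero, id, eval_add, eval_mul, eval_C, eval_sub, eval_X]
      rw [(hZ z hz).2, hPnode z hz]; ring
  have hG1 : G 1 w = 0 := by
    simp only [G, hQ, Function.iterate_one, derivative_add, derivative_mul, derivative_C,
      derivative_sub, derivative_X, eval_add, eval_mul, eval_C, eval_sub, eval_X, hw2]
    simp only [hc2, eval_zero, eval_one]; field_simp; ring
  obtain ⟨Z', hZ', hcard'⟩ := rolle_step (G 0) (G 1) (hG 0 (by omega)) (insert w Z) hG0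
  have hwZ' : w ∉ Z' := fun h => (hZ' w h).2.2 (Finset.mem_insert_self _ _)
  have k1 := Finset.card_insert_of_notMem hwZ
  have k2 := Finset.card_insert_of_notMem hwZ'
  obtain ⟨ξ, hξ, h0⟩ := rolle_iter n G hG (n-1) 1 (insert w Z') (by omega) (by omega) (by
    intro z hz
    rcases Finset.mem_insert.mp hz with rfl | hz
    · exact ⟨hw, hG1⟩
    · exact ⟨(hZ' z hz).1, (hZ' z hz).2.1⟩)
  refine ⟨ξ, hξ, ?_⟩
  have h1 : 1 + (n - 1) = n := by omega
  rw [h1] at h0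
  simp only [G] at h0
  rw [iterD_eval n Q hQdeg, hQc] at h0
  have hn0 : (n:ℝ) ≠ 0 := by positivity
  have hs : sigmaN n ≠ 0 := by unfold sigmaN; positivity
  have hFn : F n ξ = c2 * (n * sigmaN n) := by unfold sigmaN; linarith
  rw [← hPder, hFn, hc2]
  field_simp

/-- The exact bound at a zero of `T_n''`. -/
lemma bound_at (n : ℕ) (hn : 4 ≤ n) (w : ℝ) (hw : w ∈ Icc (-1:ℝ) 1)
    (hw1 : (derivative (Chebyshev.T ℝ (n:ℤ))).eval w ≠ 0)
    (hw2 : (derivative (derivative (Chebyshev.T ℝ (n:ℤ)))).eval w = 0)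
    (F : ℕ → ℝ → ℝ) (hF : DFam n F) (hF0 : ∀ t ∈ Icc (-1:ℝ) 1, |F 0 t| ≤ 1)
    (hFn : ∀ t ∈ Icc (-1:ℝ) 1, |F n t| ≤ sigmaN n) :
    |F 1 w| ≤ |(derivative (Chebyshev.T ℝ (n:ℤ))).eval w| := by
  obtain ⟨Z, l, hcard, hZ, hl⟩ := basis_exists n hn
  set D := derivative (Chebyshev.T ℝ (n:ℤ)) with hD
  have hn0 : (0:ℝ) < n := by positivity
  have hs : 0 < sigmaN n := by unfold sigmaN; positivity
  -- facts at nodes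
  have hT2 : ∀ z ∈ Z, (Chebyshev.T ℝ (n:ℤ)).eval z ^ 2 = 1 := by
    intro z hz
    have b := pyth n z (hZ z hz).1
    rw [← hD, (hZ z hz).2] at b
    have hk : (n:ℝ)^2 ≠ 0 := by positivity
    have : (n:ℝ)^2 * (1 - (Chebyshev.T ℝ (n:ℤ)).eval z ^ 2) = 0 := by rw [← b]; ring
    have := (mul_eq_zero.mp this).resolve_left hk
    linarith
  have hκ : ∀ z ∈ Z, (1 - z^2) * (derivative D).eval z
      = - (n:ℝ)^2 * (Chebyshev.T ℝ (n:ℤ)).eval z := by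
    intro z hz
    have a := ode n z
    rw [← hD, (hZ z hz).2] at a
    linarith
  have hκ0 : ∀ z ∈ Z, (derivative D).eval z ≠ 0 := by
    intro z hz h
    have a := hκ z hz
    have b := hT2 z hz
    rw [h, mul_zero] at a
    have hk : (n:ℝ)^2 ≠ 0 := by positivity
    have : (Chebyshev.T ℝ (n:ℤ)).eval z = 0 := by
      have : (n:ℝ)^2 * (Chebyshev.T ℝ (n:ℤ)).eval z = 0 := by linarith
      exact (mul_eq_zero.mp this).resolve_left hk
    rw [this] at b; norm_num at b
  have hl1 : ∀ z ∈ Z, ∀ y ∈ Z, (l z).eval y = if y = z then 1 else 0 := by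
    intro z hz y hy
    have e := (hl z hz).2
    split_ifs with h
    · subst h
      have e' := congrArg (fun p => (derivative p).eval y) e
      simp at e'
      exact mul_right_cancel₀ (hκ0 y hy) (by rw [e', one_mul])
    · have e' := congrArg (eval y) e
      rw [(hZ y hy).2] at e'
      simp only [eval_mul, eval_sub, eval_X, eval_C] at e'
      rcases mul_eq_zero.mp e' with e' | e'
      · rcases mul_eq_zero.mp e' with e' | e'
        · exact absurd (sub_eq_zero.mp e') h
        · exact e'
      · exact absurd e' (hκ0 z hz)
  have hform := err_formula n hn w hw Z l hcard hZ (fun z hz => (hl z hz).1) hl1 hw1 hw2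
  -- sign of the weights
  have hsign : ∀ z ∈ Z, ∃ r : ℝ, 0 ≤ r ∧
      (derivative (l z)).eval w = (Chebyshev.T ℝ (n:ℤ)).eval z * (r * D.eval w) := by
    intro z hz
    have e := (hl z hz).2
    have e0 := congrArg (eval w) e
    have e1 := congrArg (fun p => (derivative p).eval w) e
    simp only [eval_mul, eval_sub, eval_X, eval_C] at e0
    simp [hw2] at e1
    have e1 := e1.resolve_right (hκ0 z hz)
    have hwz : w - z ≠ 0 := by
      intro h
      rw [sub_eq_zero] at h
      exact hw1 (h ▸ (hZ z hz).2)
    have hz1 := (hZ z hz).1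
    refine ⟨(1 - z^2) / (n^2 * (w - z)^2), ?_, ?_⟩
    · apply div_nonneg _ (by positivity)
      nlinarith [hz1.1, hz1.2]
    · have a := hκ z hz
      have b := hT2 z hz
      rw [← e0]
      have h2 : (n:ℝ)^2 * (w-z)^2 ≠ 0 := by positivity
      field_simp
      have : (l z).eval w = - ((w - z) * (derivative (l z)).eval w) := by linarith
      rw [this]
      set d := (derivative (l z)).eval w
      set τ := (Chebyshev.T ℝ (n:ℤ)).eval z
      linear_combination (τ * d * (w-z)) * a - n^2 * d * (w-z) * b
  choose! r hr0 hr using hsign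
  have hsum : ∑ z ∈ Z, (Chebyshev.T ℝ (n:ℤ)).eval z * (derivative (l z)).eval w
      = (∑ z ∈ Z, r z) * D.eval w := by
    rw [Finset.sum_mul]
    apply Finset.sum_congr rfl
    intro z hz
    rw [hr z hz]
    linear_combination (r z * D.eval w) * hT2 z hz
  -- apply the formula to `T_n`
  have hrsum : ∑ z ∈ Z, r z = 1 - 1 / n := by
    obtain ⟨ξ, _, h⟩ := hform _ (dfam_poly n (Chebyshev.T ℝ (n:ℤ)))
    have hTn : (derivative^[n] (Chebyshev.T ℝ (n:ℤ))).eval ξ = sigmaN n := by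
      rw [iterD_eval n _ (by simp)]
      have := Chebyshev.leadingCoeff_T ℝ (n:ℤ)
      rw [leadingCoeff, Chebyshev.natDegree_T] at this
      simp only [Int.natAbs_natCast] at this
      rw [this]; unfold sigmaN; ring
    simp only [Function.iterate_zero, Function.iterate_one, id] at h
    rw [hTn, hsum, ← hD] at h
    have : (1 - ∑ z ∈ Z, r z - 1 / n) * D.eval w = 0 := by
      have e : sigmaN n / (n * sigmaN n) = 1 / n := by field_simp
      rw [e] at h
      linarith
    have := (mul_eq_zero.mp this).resolve_right hw1
    linarith
  obtain ⟨ξ, hξ, h⟩ := hform F hF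
  have hS : |∑ z ∈ Z, F 0 z * (derivative (l z)).eval w| ≤ (1 - 1 / n) * |D.eval w| := by
    rw [← hrsum, Finset.sum_mul]
    refine (Finset.abs_sum_le_sum_abs _ _).trans (Finset.sum_le_sum ?_)
    intro z hz
    rw [hr z hz, abs_mul, abs_mul, abs_mul, abs_of_nonneg (hr0 z hz)]
    have t1 : |(Chebyshev.T ℝ (n:ℤ)).eval z| = 1 := by
      rw [← sq_eq_sq₀ (abs_nonneg _) zero_le_one, sq_abs, hT2 z hz]; norm_num
    rw [t1, one_mul]
    exact mul_le_of_le_one_left (mul_nonneg (hr0 z hz) (abs_nonneg _)) (hF0 z (hZ z hz).1)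
  have hE : |F n ξ / (n * sigmaN n) * D.eval w| ≤ 1 / n * |D.eval w| := by
    rw [abs_mul]
    apply mul_le_mul_of_nonneg_right _ (abs_nonneg _)
    rw [abs_div, abs_of_pos (show 0 < n * sigmaN n by positivity), div_le_div_iff₀ (by positivity)
      hn0]
    nlinarith [hFn ξ hξ]
  have : F 1 w = (∑ z ∈ Z, F 0 z * (derivative (l z)).eval w)
      + F n ξ / (n * sigmaN n) * D.eval w := by linarith
  rw [this]
  refine (abs_add_le _ _).trans ?_
  linarith

lemma main_bound (n : ℕ) (hn : 4 ≤ n) (w : ℝ)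
    (hw2 : (derivative (derivative (Chebyshev.T ℝ (n:ℤ)))).eval w = 0)
    (x : ℝ) (hx : x ∈ Icc 0 w)
    (F : ℕ → ℝ → ℝ) (hF : DFam n F) (hF0 : ∀ t ∈ Icc (-1:ℝ) 1, |F 0 t| ≤ 1)
    (hFn : ∀ t ∈ Icc (-1:ℝ) 1, |F n t| ≤ sigmaN n) :
    |F 1 x| ≤ (n:ℝ)^2 / 2 := by
  have hw0 : 0 ≤ w := hx.1.trans hx.2
  obtain ⟨hwlt, hwb⟩ := omega_bound n hn w hw0 hw2
  have hwI : w ∈ Icc (-1:ℝ) 1 := ⟨by linarith, hwlt.le⟩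
  have hn0 : (0:ℝ) < n := by positivity
  -- value of `T_n'(w)`
  have hd : (derivative (Chebyshev.T ℝ (n:ℤ))).eval w ^ 2 * ((n:ℝ)^2 * (1 - w^2) + w^2)
      = (n:ℝ)^4 := by
    have a := ode n w
    have b := pyth n w hwI
    rw [hw2] at a
    set d := (derivative (Chebyshev.T ℝ (n:ℤ))).eval w
    set τ := (Chebyshev.T ℝ (n:ℤ)).eval w
    linear_combination (n:ℝ)^2 * b - (w * d + n^2 * τ) * a
  have hw1 : (derivative (Chebyshev.T ℝ (n:ℤ))).eval w ≠ 0 := by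
    intro h
    rw [h] at hd
    have : (0:ℝ) < (n:ℝ)^4 := by positivity
    linarith
  have hdb : (1 + w) * |(derivative (Chebyshev.T ℝ (n:ℤ))).eval w| ≤ (n:ℝ)^2 / 2 := by
    apply abs_le_of_sq_le_sq' _ (by positivity) |>.2
    rw [mul_pow, sq_abs]
    set d := (derivative (Chebyshev.T ℝ (n:ℤ))).eval w
    have h4 : 4 * (1 + w)^2 ≤ (n:ℝ)^2 * (1 - w^2) + w^2 := by
      nlinarith [mul_le_mul_of_nonneg_right hwb (show 0 ≤ 1 + w by linarith)]
    nlinarith [mul_le_mul_of_nonneg_left h4 (sq_nonneg d)]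
  -- scaling
  set q : ℝ := (1 + x) / (1 + w) with hq
  have hq0 : 0 < q := by have := hx.1; positivity
  have hq1 : q ≤ 1 := by rw [hq, div_le_one (by linarith)]; linarith [hx.2]
  have hqw : q * (1 + w) = 1 + x := by rw [hq]; field_simp
  have hmap : ∀ s ∈ Icc (-1:ℝ) 1, q * (s + 1) - 1 ∈ Icc (-1:ℝ) 1 := by
    intro s hs
    have := hs.1; have := hs.2
    constructor <;> nlinarith
  let G : ℕ → ℝ → ℝ := fun i s => q^i * F i (q * (s + 1) - 1)
  have hG : DFam n G := by
    intro i hi s hs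
    have a : HasDerivWithinAt (fun s : ℝ => q * (s + 1) - 1) q (Icc (-1:ℝ) 1) s := by
      have := (((hasDerivAt_id s).add_const (1:ℝ)).const_mul q).sub_const 1
      simpa using this.hasDerivWithinAt
    have b := ((hF i hi _ (hmap s hs)).comp s a hmap).const_mul (q^i)
    refine b.congr_deriv ?_
    simp only [G]; ring
  have hfin := bound_at n hn w hwI hw1 hw2 G hG
    (by intro t ht; simpa [G] using hF0 _ (hmap t ht))
    (by
      intro t ht
      simp only [G]
      rw [abs_mul, abs_of_pos (pow_pos hq0 n)]
      exact (mul_le_of_le_one_left (abs_nonneg _) (pow_le_one₀ hq0.le hq1)).trans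
        (hFn _ (hmap t ht)))
  have hGw : G 1 w = q * F 1 x := by
    simp only [G, pow_one]
    congr 2
    linarith
  rw [hGw, abs_mul, abs_of_pos hq0] at hfin
  have hA := abs_nonneg (F 1 x)
  calc |F 1 x| ≤ (1 + x) * |F 1 x| := by nlinarith [hx.1]
    _ = (1 + w) * (q * |F 1 x|) := by rw [← hqw]; ring
    _ ≤ (1 + w) * |(derivative (Chebyshev.T ℝ (n:ℤ))).eval w| := by gcongr
    _ ≤ _ := hdb

/-- `m_1(x,σ_n) ≤ (1/2)·T_n'(1)` on `[0, ω₁]` for `n ≥ 4`. -/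
theorem m1_upper_bound (n : ℕ) (hn : 4 ≤ n) (ω₁ : ℝ)
    (hω : IsGreatest {x : ℝ | chebDeriv n 2 x = 0} ω₁) :
    ∀ x ∈ Icc (0:ℝ) ω₁,
      mval n 1 x (sigmaN n) ≤ (1 / 2) * chebDeriv n 1 1 ∧
      ∀ f : ℝ → ℝ, NTimesDiffOn n f (Icc (-1:ℝ) 1) →
        (∀ t ∈ Icc (-1:ℝ) 1, |f t| ≤ 1) →
        (∀ t ∈ Icc (-1:ℝ) 1, |iteratedDerivWithin n f (Icc (-1:ℝ) 1) t| ≤ sigmaN n) →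
        |iteratedDerivWithin 1 f (Icc (-1:ℝ) 1) x| ≤ (1 / 2) * chebDeriv n 1 1 := by
  intro x hx
  have hB : (1 / 2) * chebDeriv n 1 1 = (n:ℝ)^2 / 2 := by
    unfold chebDeriv
    rw [Function.iterate_one, Chebyshev.derivative_T_eval_one]
    push_cast; ring
  have hw : (derivative (derivative (Chebyshev.T ℝ (n:ℤ)))).eval ω₁ = 0 := hω.1
  rw [hB]
  have key : ∀ f : ℝ → ℝ, NTimesDiffOn n f (Icc (-1:ℝ) 1) →
        (∀ t ∈ Icc (-1:ℝ) 1, |f t| ≤ 1) →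
        (∀ t ∈ Icc (-1:ℝ) 1, |iteratedDerivWithin n f (Icc (-1:ℝ) 1) t| ≤ sigmaN n) →
        |iteratedDerivWithin 1 f (Icc (-1:ℝ) 1) x| ≤ (n:ℝ)^2 / 2 := by
    intro f hd h0 hn'
    refine main_bound n hn ω₁ hw x hx (fun i => iteratedDerivWithin i f (Icc (-1:ℝ) 1)) ?_ ?_ hn'
    · intro i hi t ht
      simp only [iteratedDerivWithin_succ]
      exact (hd i hi t ht).hasDerivWithinAt
    · intro t ht
      simpa using h0 t ht
  refine ⟨?_, key⟩
  apply Real.sSup_le _ (by positivity)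
  rintro y ⟨f, ⟨h1, h2, h3⟩, rfl⟩
  exact key f h1 h2 h3
end

section
/- Let n ≥ 2 and 0 ≤ σ ≤ σ_n. Then for every x ∈ [-1,1], m_{n-1}(x,σ) ≤ m_{n-1}(1,σ); that is, the supremum of |f^{(n-1)}(x)| over f ∈ W^n_∞(σ) is maximal at the endpoint x = 1. -/
open Polynomial Set

namespace Karlin

/-- Divided-difference weight. -/
noncomputable def wt (S : Finset ℝ) (x : ℝ) : ℝ := (∏ y ∈ S.erase x, (x - y))⁻¹

/-- Divided difference over the node set `S`. -/
noncomputable def dd (S : Finset ℝ) (f : ℝ → ℝ) : ℝ := ∑ x ∈ S, f x * wt S x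

/-- Norm of the divided difference functional. -/
noncomputable def DD (S : Finset ℝ) : ℝ := ∑ x ∈ S, |wt S x|

lemma wt_ne_zero (S : Finset ℝ) (x : ℝ) : wt S x ≠ 0 := by
  unfold wt
  apply inv_ne_zero
  rw [Finset.prod_ne_zero_iff]
  intro y hy
  exact sub_ne_zero.2 (Finset.ne_of_mem_erase hy).symm

lemma wt_erase (U : Finset ℝ) {a x : ℝ} (ha : a ∈ U) (hx : x ≠ a) :
    wt (U.erase a) x = wt U x * (x - a) := by
  unfold wt
  have h : a ∈ U.erase x := Finset.mem_erase.2 ⟨hx.symm, ha⟩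
  rw [← Finset.mul_prod_erase _ _ h, Finset.erase_right_comm]
  have : x - a ≠ 0 := sub_ne_zero.2 hx
  rw [mul_inv]
  field_simp

lemma dd_le_DD (S : Finset ℝ) (f : ℝ → ℝ) (h : ∀ x ∈ S, |f x| ≤ 1) : |dd S f| ≤ DD S := by
  unfold dd DD
  refine (Finset.abs_sum_le_sum_abs _ _).trans (Finset.sum_le_sum fun x hx => ?_)
  rw [abs_mul]
  exact mul_le_of_le_one_left (abs_nonneg _) (h x hx)

lemma dd_low (S : Finset ℝ) (P : ℝ[X]) (hP : P.degree < S.card) :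
    dd S (fun x => P.eval x) = P.coeff (S.card - 1) := by
  rw [Lagrange.coeff_eq_sum (v := id) (Function.injective_id.injOn) hP]
  simp [dd, wt, div_eq_mul_inv]

lemma nodal_coeffs (S : Finset ℝ) :
    (Lagrange.nodal S id).coeff S.card = 1 ∧
    (X * Lagrange.nodal S id).coeff S.card = - ∑ x ∈ S, x ∧
    2 * (X * (X * Lagrange.nodal S id)).coeff S.card = (∑ x ∈ S, x)^2 - ∑ x ∈ S, x^2 := by
  induction S using Finset.induction_on with
  | empty => simp [Lagrange.nodal_empty, ← pow_two, coeff_X_pow]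
  | insert a S ha ih =>
    obtain ⟨h1, h2, h3⟩ := ih
    rw [Lagrange.nodal_insert_eq_nodal ha, Finset.card_insert_of_notMem ha]
    set w := Lagrange.nodal S id with hw
    have h0 : w.coeff (S.card + 1) = 0 := by
      apply coeff_eq_zero_of_natDegree_lt
      rw [hw, Lagrange.natDegree_nodal]; omega
    rw [Finset.sum_insert ha, Finset.sum_insert ha]
    have e1 : (X - C (id a)) * w = X * w - C a * w := by simp; ring
    have e2 : X * (X * w - C a * w) = X * (X * w) - C a * (X * w) := by ring
    rw [e1]
    refine ⟨?_, ?_, ?_⟩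
    · rw [coeff_sub, coeff_X_mul, coeff_C_mul, h0, h1]; ring
    · rw [coeff_X_mul, coeff_sub, coeff_C_mul, h1, h2]; ring
    · rw [coeff_X_mul, e2, coeff_sub, coeff_C_mul, h2]; linear_combination h3

lemma dd_add (S : Finset ℝ) (f g : ℝ → ℝ) : dd S (fun x => f x + g x) = dd S f + dd S g := by
  simp [dd, add_mul, Finset.sum_add_distrib]

lemma dd_smul (S : Finset ℝ) (c : ℝ) (g : ℝ → ℝ) : dd S (fun x => c * g x) = c * dd S g := by
  simp [dd, mul_assoc, Finset.mul_sum]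

lemma dd_high (S : Finset ℝ) (n : ℕ) (hS : S.card = n + 1) (P : ℝ[X]) (hP : P.natDegree ≤ n + 2) :
    dd S (fun x => P.eval x) = P.coeff n + P.coeff (n+1) * ∑ x ∈ S, x +
      P.coeff (n+2) * (((∑ x ∈ S, x)^2 + ∑ x ∈ S, x^2) / 2) := by
  obtain ⟨h1, h2, h3⟩ := nodal_coeffs S
  set w := Lagrange.nodal S id with hw
  set s := ∑ x ∈ S, x
  set s2 := ∑ x ∈ S, x^2
  rw [hS] at h1 h2 h3
  rw [coeff_X_mul] at h2 h3
  set u := P.coeff (n+2)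
  set v := P.coeff (n+1) + u * s
  set R := P - C u * (X * w) - C v * w with hR
  have hwd : w.natDegree = n + 1 := by rw [hw, Lagrange.natDegree_nodal, hS]
  have hw2 : w.coeff (n+2) = 0 := coeff_eq_zero_of_natDegree_lt (by omega)
  have hdeg : R.degree < S.card := by
    rw [hS, degree_lt_iff_coeff_zero]
    intro m hm
    rcases Nat.lt_or_ge (n+2) m with h | h
    · obtain ⟨m, rfl⟩ : ∃ k, m = k + 1 := ⟨m-1, by omega⟩
      rw [hR]
      simp only [coeff_sub, coeff_C_mul, coeff_X_mul]
      rw [coeff_eq_zero_of_natDegree_lt (p := P) (by omega),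
        coeff_eq_zero_of_natDegree_lt (p := w) (n := m) (by omega),
        coeff_eq_zero_of_natDegree_lt (p := w) (n := m+1) (by omega)]
      ring
    · rcases (show m = n+1 ∨ m = n+2 by omega) with rfl | rfl
      · simp only [hR, coeff_sub, coeff_C_mul, coeff_X_mul, h1, h2]; ring
      · simp only [hR, coeff_sub, coeff_C_mul, coeff_X_mul, h1, hw2]; ring
  have e : dd S (fun x => P.eval x) = dd S (fun x => R.eval x) := by
    unfold dd
    refine Finset.sum_congr rfl fun x hx => ?_
    have : w.eval x = 0 := Lagrange.eval_nodal_at_node (v := id) hx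
    simp [hR, this]
  rw [e, dd_low S R hdeg, hS]
  simp only [hR, coeff_sub, coeff_C_mul, Nat.add_sub_cancel]
  rw [h2]
  have : (X * w).coeff n = (s^2 - s2)/2 := by linarith
  rw [this]; ring

lemma dd_mid (S : Finset ℝ) (n : ℕ) (hS : S.card = n + 1) (P : ℝ[X]) (hP : P.natDegree ≤ n + 1) :
    dd S (fun x => P.eval x) = P.coeff n + P.coeff (n+1) * ∑ x ∈ S, x := by
  rw [dd_high S n hS P (by omega), coeff_eq_zero_of_natDegree_lt (n := n+2) (by omega)]
  ring

lemma T_deg (n : ℕ) : (Chebyshev.T ℝ ((n+1 : ℕ) : ℤ)).natDegree = n + 1 := by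
  rw [Chebyshev.natDegree_T, Int.natAbs_natCast]

lemma T_coeff (n : ℕ) : (Chebyshev.T ℝ ((n+1 : ℕ) : ℤ)).coeff (n+1) = 2 ^ n := by
  have h1 := Chebyshev.leadingCoeff_T ℝ ((n+1 : ℕ) : ℤ)
  rw [leadingCoeff, T_deg, Int.natAbs_natCast, Nat.add_sub_cancel] at h1
  exact h1

lemma T_bound (n : ℕ) (x : ℝ) (hx : x ∈ Icc (-1:ℝ) 1) :
    |(Chebyshev.T ℝ ((n+1 : ℕ) : ℤ)).eval x| ≤ 1 :=
  Chebyshev.abs_eval_T_real_le_one _ (abs_le.2 hx)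

/-- The Remez-type exchange argument. -/
lemma exchange (n : ℕ) (a : ℝ) (ha0 : 0 ≤ a) (ha : a ≤ 2 ^ n) (S : Finset ℝ)
    (hS : S.card = n + 1) (hSI : ∀ x ∈ S, x ∈ Icc (-1:ℝ) 1)
    (hmin : ∀ S' : Finset ℝ, S'.card = n + 1 → (∀ x ∈ S', x ∈ Icc (-1:ℝ) 1) →
      DD S - a * ∑ x ∈ S, x ≤ DD S' - a * ∑ x ∈ S', x) :
    ∃ p : ℝ[X], p.natDegree ≤ n + 1 ∧ p.coeff (n+1) = a ∧
      p.coeff n = DD S - a * ∑ x ∈ S, x ∧ ∀ x ∈ Icc (-1:ℝ) 1, |p.eval x| ≤ 1 := by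
  have hinj : Set.InjOn (id : ℝ → ℝ) S := Function.injective_id.injOn
  set L := Lagrange.interpolate S id (fun x => |wt S x| / wt S x) with hL
  set w := Lagrange.nodal S id with hw
  have hwd : w.natDegree = n + 1 := by rw [hw, Lagrange.natDegree_nodal, hS]
  have hLd : L.degree < S.card := Lagrange.degree_interpolate_lt _ hinj
  have hLd' : L.natDegree ≤ n + 1 := by
    rw [hS] at hLd; exact natDegree_le_of_degree_le hLd.le
  set p := L + C a * w with hp
  have hpd : p.natDegree ≤ n + 1 := by
    refine natDegree_add_le_of_degree_le hLd' ?_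
    exact (natDegree_C_mul_le _ _).trans hwd.le
  have hpa : p.coeff (n+1) = a := by
    rw [hp, coeff_add, coeff_C_mul, coeff_eq_zero_of_degree_lt (by rw [← hS]; exact hLd),
      ← hS, (nodal_coeffs S).1]; ring
  have hpe : ∀ x ∈ S, p.eval x = |wt S x| / wt S x := by
    intro x hx
    have h1 : w.eval x = 0 := Lagrange.eval_nodal_at_node (v := id) hx
    have h2 : L.eval x = |wt S x| / wt S x :=
      Lagrange.eval_interpolate_at_node (v := id) _ hinj hx
    rw [hp, eval_add, eval_mul, h1, h2]; ring
  have hpw : ∀ x ∈ S, p.eval x * wt S x = |wt S x| := by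
    intro x hx
    rw [hpe x hx, div_mul_cancel₀ _ (wt_ne_zero S x)]
  have hpabs : ∀ x ∈ S, |p.eval x| = 1 := by
    intro x hx
    rw [hpe x hx, abs_div, abs_abs, div_self (abs_ne_zero.2 (wt_ne_zero S x))]
  have hdd : dd S (fun x => p.eval x) = DD S := Finset.sum_congr rfl hpw
  have hmid := dd_mid S n hS p hpd
  rw [hdd, hpa] at hmid
  refine ⟨p, hpd, hpa, by linarith, ?_⟩
  by_contra! hcon
  obtain ⟨s, hs, hs1⟩ := hcon
  have hsS : s ∉ S := fun h => by rw [hpabs s h] at hs1; exact lt_irrefl _ hs1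
  set U := insert s S with hU
  have hUS : U.erase s = S := Finset.erase_insert hsS
  have hUc : U.card = n + 1 + 1 := by rw [hU, Finset.card_insert_of_notMem hsS, hS]
  have hsU : s ∈ U := Finset.mem_insert_self _ _
  have hne : ∀ x ∈ S, x ≠ s := fun x hx h => hsS (h ▸ hx)
  have hwS : ∀ x ∈ S, wt S x = wt U x * (x - s) := fun x hx => by
    rw [← wt_erase U hsU (hne x hx), hUS]
  -- top divided difference
  have htop : ∀ P : ℝ[X], P.natDegree ≤ n + 1 →
      P.coeff (n+1) = P.eval s * wt U s + ∑ x ∈ S, P.eval x * wt U x := by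
    intro P hP
    have := dd_low U P (by
      rw [hUc]
      exact lt_of_le_of_lt (degree_le_of_natDegree_le hP) (by exact_mod_cast Nat.lt_succ_self _))
    rw [hUc] at this
    rw [Nat.add_sub_cancel] at this
    rw [← this, dd, hU, Finset.sum_insert hsS]
  have hps0 : p.eval s ≠ 0 := fun h => by rw [h, abs_zero] at hs1; linarith
  have hds : p.eval s * wt U s ≠ 0 := mul_ne_zero hps0 (wt_ne_zero _ _)
  -- conclusion from exchange
  have hexch : ∀ b ∈ S, 0 < (p.eval s * wt U s) * (s - b) →
      (∀ x ∈ S, x ≠ b → 0 < (x - b) * (x - s)) → False := by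
    intro b hb hpos hside
    have hbU : b ∈ U := Finset.mem_insert_of_mem hb
    have hbs : s ≠ b := (hne b hb).symm
    have hcard : (U.erase b).card = n + 1 := by
      rw [Finset.card_erase_of_mem hbU, hUc]; rfl
    have hI : ∀ x ∈ U.erase b, x ∈ Icc (-1:ℝ) 1 := by
      intro x hx
      rcases Finset.mem_insert.1 (Finset.mem_of_mem_erase hx) with rfl | h
      · exact hs
      · exact hSI x h
    have h1 := hmin _ hcard hI
    have h2 := dd_mid _ n hcard p hpd
    rw [hpa] at h2
    have h3 : DD (U.erase b) < dd (U.erase b) (fun x => p.eval x) := by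
      unfold DD dd
      apply Finset.sum_lt_sum
      · intro x hx
        rcases Finset.mem_insert.1 (Finset.mem_of_mem_erase hx) with rfl | h
        · rw [wt_erase U hbU hbs, ← mul_assoc, ← abs_of_pos hpos, abs_mul, abs_mul, abs_mul]
          nlinarith [mul_nonneg (abs_nonneg (wt U x)) (abs_nonneg (x-b))]
        · have hxb := Finset.ne_of_mem_erase hx
          have hxs := hne x h
          have e1 := hpw x h
          have e2 := hside x h hxb
          rw [hwS x h] at e1
          rw [wt_erase U hbU hxb]
          have h0 : 0 ≤ p.eval x * (wt U x * (x - b)) := by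
            have : p.eval x * (wt U x * (x - b)) =
              (p.eval x * (wt U x * (x - s))) * ((x - b) * (x - s)) / (x-s)^2 := by
              have : x - s ≠ 0 := sub_ne_zero.2 hxs
              field_simp
            rw [this, e1]
            exact div_nonneg (mul_nonneg (abs_nonneg _) e2.le) (sq_nonneg _)
          rw [← abs_of_nonneg h0, abs_mul _ (wt U x * (x-b)), hpabs x h, one_mul]
      · refine ⟨s, Finset.mem_erase.2 ⟨hbs, hsU⟩, ?_⟩
        rw [wt_erase U hbU hbs, ← mul_assoc, ← abs_of_pos hpos, abs_mul, abs_mul, abs_mul]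
        have : 0 < |wt U s| * |s - b| :=
          mul_pos (abs_pos.2 (wt_ne_zero _ _)) (abs_pos.2 (sub_ne_zero.2 hbs))
        nlinarith
    linarith
  rcases lt_or_gt_of_ne hds with hneg | hpos
  · by_cases hex : (S.filter (fun x => s < x)).Nonempty
    · obtain ⟨b, hb, hbm⟩ := Finset.exists_min_image _ id hex
      rw [Finset.mem_filter] at hb
      refine hexch b hb.1 (mul_pos_of_neg_of_neg hneg (by linarith [hb.2])) ?_
      intro x hx hxb
      rcases lt_or_gt_of_ne (hne x hx) with h | h
      · exact mul_pos_of_neg_of_neg (by linarith [hb.2]) (by linarith)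
      · have := hbm x (Finset.mem_filter.2 ⟨hx, h⟩)
        simp only [id] at this
        have := lt_of_le_of_ne this hxb.symm
        exact mul_pos (by linarith) (by linarith)
    · rw [Finset.not_nonempty_iff_eq_empty, Finset.filter_eq_empty_iff] at hex
      have h := htop p hpd
      rw [hpa] at h
      have : ∑ x ∈ S, p.eval x * wt U x ≤ 0 := by
        apply Finset.sum_nonpos
        intro x hx
        have hxs : x < s := lt_of_le_of_ne (not_lt.1 (hex hx)) (hne x hx)
        have e1 := hpw x hx
        rw [hwS x hx, ← mul_assoc] at e1
        have : 0 ≤ (p.eval x * wt U x) * (x - s) := e1 ▸ abs_nonneg _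
        nlinarith
      linarith
  · by_cases hex : (S.filter (fun x => x < s)).Nonempty
    · obtain ⟨b, hb, hbm⟩ := Finset.exists_max_image _ id hex
      rw [Finset.mem_filter] at hb
      refine hexch b hb.1 (mul_pos hpos (by linarith [hb.2])) ?_
      intro x hx hxb
      rcases lt_or_gt_of_ne (hne x hx) with h | h
      · have := hbm x (Finset.mem_filter.2 ⟨hx, h⟩)
        simp only [id] at this
        have := lt_of_le_of_ne this hxb
        exact mul_pos_of_neg_of_neg (by linarith) (by linarith)
      · exact mul_pos (by linarith [hb.2]) (by linarith)
    · rw [Finset.not_nonempty_iff_eq_empty, Finset.filter_eq_empty_iff] at hex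
      have h := htop p hpd
      rw [hpa] at h
      have hT := htop (Chebyshev.T ℝ ((n+1 : ℕ) : ℤ)) (T_deg n).le
      rw [T_coeff n] at hT
      have hTb : ∀ x ∈ Icc (-1:ℝ) 1, |(Chebyshev.T ℝ ((n+1 : ℕ) : ℤ)).eval x| ≤ 1 :=
        fun x hx => Chebyshev.abs_eval_T_real_le_one _ (abs_le.2 hx)
      have hle : ∑ x ∈ S, (Chebyshev.T ℝ ((n+1 : ℕ) : ℤ)).eval x * wt U x ≤
          ∑ x ∈ S, p.eval x * wt U x := by
        refine Finset.sum_le_sum fun x hx => ?_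
        have hxs : s < x := lt_of_le_of_ne (not_lt.1 (hex hx)) (hne x hx).symm
        have e1 := hpw x hx
        rw [hwS x hx, ← mul_assoc, abs_mul, abs_of_pos (sub_pos.2 hxs)] at e1
        have e2 := mul_right_cancel₀ (sub_pos.2 hxs).ne' e1
        rw [e2]
        refine (le_abs_self _).trans ?_
        rw [abs_mul]
        exact mul_le_of_le_one_left (abs_nonneg _) (hTb x (hSI x hx))
      have hlt : (Chebyshev.T ℝ ((n+1 : ℕ) : ℤ)).eval s * wt U s < p.eval s * wt U s := by
        rw [← abs_of_pos hpos, abs_mul]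
        refine (le_abs_self _).trans_lt ?_
        rw [abs_mul]
        exact mul_lt_mul_of_pos_right ((hTb s hs).trans_lt hs1) (abs_pos.2 (wt_ne_zero _ _))
      linarith


/-- Chebyshev nodes without the left endpoint. -/
lemma exists_cheb_nodes (n : ℕ) : ∃ S : Finset ℝ, S.card = n + 1 ∧
    (∀ x ∈ S, x ∈ Icc (-1:ℝ) 1) ∧ ∑ x ∈ S, x = 1 ∧
    dd S (fun x => (Chebyshev.T ℝ ((n+1 : ℕ) : ℤ)).eval x) = DD S := by
  have hinj : Set.InjOn (Chebyshev.node (n+1)) (Finset.range (n+1+1)) :=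
    (Chebyshev.strictAntiOn_node (n+1)).injOn
  have hinj' : Set.InjOn (Chebyshev.node (n+1)) (Finset.range (n+1)) :=
    hinj.mono (by intro x; simp; omega)
  set U := (Finset.range (n+1+1)).image (Chebyshev.node (n+1)) with hU
  have hlast : Chebyshev.node (n+1) (n+1) = -1 := Chebyshev.node_eq_neg_one (by omega)
  have hUe : U.erase (-1) = (Finset.range (n+1)).image (Chebyshev.node (n+1)) := by
    ext x
    simp only [hU, Finset.mem_erase, Finset.mem_image, Finset.mem_range]
    constructor
    · rintro ⟨hx, i, hi, rfl⟩
      refine ⟨i, ?_, rfl⟩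
      rcases Nat.lt_or_ge i (n+1) with h | h
      · exact h
      · exact absurd (by rw [← hlast]; congr 1; omega) hx
    · rintro ⟨i, hi, rfl⟩
      refine ⟨?_, i, by omega, rfl⟩
      have := Chebyshev.node_lt (n := n+1) (i := i) (j := n+1) le_rfl hi
      rw [hlast] at this
      exact this.ne'
  have hmU : (-1:ℝ) ∈ U := Finset.mem_image.2 ⟨n+1, by simp, hlast⟩
  refine ⟨U.erase (-1), ?_, ?_, ?_, ?_⟩
  · rw [hUe, Finset.card_image_of_injOn hinj', Finset.card_range]
  · intro x hx
    rw [hUe, Finset.mem_image] at hx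
    obtain ⟨i, -, rfl⟩ := hx
    exact Chebyshev.node_mem_Icc
  · rw [hUe, Finset.sum_image hinj']
    have h1 : ∑ i ∈ Finset.range (n+1+1), Chebyshev.node (n+1) i = 0 := by
      have h2 := Finset.sum_range_reflect (Chebyshev.node (n+1)) (n+1+1)
      have h3 : ∑ j ∈ Finset.range (n+1+1), Chebyshev.node (n+1) (n+1+1-1-j) =
          ∑ j ∈ Finset.range (n+1+1), - Chebyshev.node (n+1) j := by
        refine Finset.sum_congr rfl fun j hj => ?_
        rw [Finset.mem_range] at hj
        unfold Chebyshev.node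
        rw [← Real.cos_pi_sub]
        congr 1
        rw [Nat.add_sub_cancel, Nat.cast_sub (by omega)]
        push_cast
        field_simp
      rw [h3, Finset.sum_neg_distrib] at h2
      linarith
    rw [Finset.sum_range_succ, hlast] at h1
    linarith
  · unfold dd DD
    refine Finset.sum_congr rfl fun x hx => ?_
    have hx1 : x ≠ -1 := Finset.ne_of_mem_erase hx
    have hxU := Finset.mem_of_mem_erase hx
    rw [wt_erase U hmU hx1]
    rw [hU, Finset.mem_image] at hxU
    obtain ⟨i, hi, rfl⟩ := hxU
    have hi' : i ≤ n + 1 := by rw [Finset.mem_range] at hi; omega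
    have hpos := Chebyshev.zero_lt_prod_node_sub_node hi'
    have hprod : wt U (Chebyshev.node (n+1) i) = (∏ j ∈ (Finset.range (n + 1 + 1)).erase i,
        (Chebyshev.node (n+1) i - Chebyshev.node (n+1) j))⁻¹ := by
      unfold wt
      congr 1
      have : U.erase (Chebyshev.node (n+1) i) =
          ((Finset.range (n+1+1)).erase i).image (Chebyshev.node (n+1)) := by
        ext y
        simp only [hU, Finset.mem_erase, Finset.mem_image]
        constructor
        · rintro ⟨h, j, hj, rfl⟩
          exact ⟨j, ⟨fun e => h (by rw [e]), hj⟩, rfl⟩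
        · rintro ⟨j, ⟨h, hj⟩, rfl⟩
          exact ⟨fun e => h (hinj hj hi e), j, hj, rfl⟩
      rw [this, Finset.prod_image]
      exact hinj.mono (by intro j hj; exact Finset.mem_of_mem_erase hj)
    beta_reduce
    rw [Chebyshev.eval_T_real_node (Finset.mem_Iic.2 hi')]
    have hge : 0 < Chebyshev.node (n+1) i - -1 := by
      have := (Chebyshev.node_mem_Icc (n := n+1) (i := i)).1
      have := lt_of_le_of_ne this hx1.symm
      linarith
    have h0 : 0 < (-1:ℝ)^i * wt U (Chebyshev.node (n+1) i) := by
      rw [hprod]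
      set A := ∏ j ∈ (Finset.range (n + 1 + 1)).erase i,
        (Chebyshev.node (n+1) i - Chebyshev.node (n+1) j)
      have : (-1:ℝ)^i * A⁻¹ = ((-1:ℝ)^i * A)⁻¹ := by
        rw [mul_inv, ← inv_pow]; norm_num
      rw [this]
      exact inv_pos.2 hpos
    rw [← mul_assoc, ← abs_of_pos (mul_pos h0 hge)]
    simp [abs_mul]

lemma DD_nonneg (S : Finset ℝ) : 0 ≤ DD S := Finset.sum_nonneg fun _ _ => abs_nonneg _

lemma sum_le_card (n : ℕ) (S : Finset ℝ) (hS : S.card = n + 1)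
    (hSI : ∀ x ∈ S, x ∈ Icc (-1:ℝ) 1) : ∑ x ∈ S, x ≤ n + 1 := by
  have := Finset.sum_le_card_nsmul S (fun x => x) 1 (fun x hx => (hSI x hx).2)
  rw [hS] at this
  simpa using this

/-- Lower bound for the norm when two nodes are close. -/
lemma DD_lower (n : ℕ) (S : Finset ℝ) (hS : S.card = n + 1)
    (hSI : ∀ x ∈ S, x ∈ Icc (-1:ℝ) 1) (a b : ℝ) (ha : a ∈ S) (hb : b ∈ S) (hab : a ≠ b) :
    1 ≤ DD S * (2 ^ n * |a - b|) := by
  have h1 : |wt S a| ≤ DD S :=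
    Finset.single_le_sum (f := fun x => |wt S x|) (fun _ _ => abs_nonneg _) ha
  have hbe : b ∈ S.erase a := Finset.mem_erase.2 ⟨hab.symm, hb⟩
  have h2 : |∏ y ∈ S.erase a, (a - y)| ≤ 2 ^ n * |a - b| := by
    rw [← Finset.mul_prod_erase _ _ hbe, abs_mul, mul_comm]
    refine mul_le_mul_of_nonneg_right ?_ (abs_nonneg _)
    rw [Finset.abs_prod]
    have h3 : ∏ y ∈ (S.erase a).erase b, |a - y| ≤ ∏ y ∈ (S.erase a).erase b, (2:ℝ) := by
      refine Finset.prod_le_prod (fun _ _ => abs_nonneg _) fun y hy => ?_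
      have hy' := hSI y (Finset.mem_of_mem_erase (Finset.mem_of_mem_erase hy))
      have ha' := hSI a ha
      rw [abs_le]; constructor <;> linarith [hy'.1, hy'.2, ha'.1, ha'.2]
    refine h3.trans ?_
    rw [Finset.prod_const]
    apply pow_le_pow_right₀ (by norm_num)
    rw [Finset.card_erase_of_mem hbe, Finset.card_erase_of_mem ha, hS]; omega
  have h3 : |wt S a| * |∏ y ∈ S.erase a, (a - y)| = 1 := by
    rw [← abs_mul]
    have := wt_ne_zero S a
    unfold wt at this ⊢
    rw [inv_mul_cancel₀ (fun e => this (by rw [e, inv_zero]))]; simp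
  calc (1:ℝ) = |wt S a| * |∏ y ∈ S.erase a, (a - y)| := h3.symm
    _ ≤ DD S * (2 ^ n * |a - b|) := mul_le_mul h1 h2 (abs_nonneg _) (DD_nonneg S)

lemma exists_min (n : ℕ) (a : ℝ) (ha0 : 0 ≤ a) : ∃ S : Finset ℝ, S.card = n + 1 ∧
    (∀ x ∈ S, x ∈ Icc (-1:ℝ) 1) ∧
    (∀ S' : Finset ℝ, S'.card = n + 1 → (∀ x ∈ S', x ∈ Icc (-1:ℝ) 1) →
      DD S - a * ∑ x ∈ S, x ≤ DD S' - a * ∑ x ∈ S', x) := by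
  obtain ⟨τ, hτ, hτI, -, -⟩ := exists_cheb_nodes n
  set F : Finset ℝ → ℝ := fun S => DD S - a * ∑ x ∈ S, x with hF
  have hFlow : ∀ S : Finset ℝ, S.card = n + 1 → (∀ x ∈ S, x ∈ Icc (-1:ℝ) 1) →
      DD S ≤ F S + a * (n + 1) := by
    intro S h1 h2
    have := mul_le_mul_of_nonneg_left (sum_le_card n S h1 h2) ha0
    simp only [hF]; linarith
  set M := F τ + a * (n+1) + 1 with hM
  have hMpos : 0 < M := by have := hFlow τ hτ hτI; have := DD_nonneg τ; linarith
  set δ := 1 / (2 ^ n * M) with hδ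
  have hδpos : 0 < δ := by positivity
  have hsep : ∀ S : Finset ℝ, S.card = n + 1 → (∀ x ∈ S, x ∈ Icc (-1:ℝ) 1) → F S ≤ F τ →
      ∀ x ∈ S, ∀ y ∈ S, x ≠ y → δ ≤ |x - y| := by
    intro S h1 h2 h3 x hx y hy hxy
    by_contra! hlt
    have h4 := DD_lower n S h1 h2 x y hx hy hxy
    have h5 : DD S < M := by have := hFlow S h1 h2; linarith
    have h6 : M * (2 ^ n * δ) = 1 := by rw [hδ]; field_simp
    have h7 : DD S * (2 ^ n * |x - y|) ≤ DD S * (2^n * δ) := by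
      apply mul_le_mul_of_nonneg_left _ (DD_nonneg S)
      apply mul_le_mul_of_nonneg_left hlt.le (by positivity)
    have h8 : DD S * (2^n * δ) < M * (2^n * δ) := mul_lt_mul_of_pos_right h5 (by positivity)
    linarith
  set K : Set (Fin (n+1) → ℝ) := (Set.univ.pi fun _ => Icc (-1:ℝ) 1) ∩
    {v | ∀ i j, i ≠ j → δ ≤ |v i - v j|} with hK
  have hKc : IsCompact K := by
    refine (isCompact_univ_pi fun _ => isCompact_Icc).inter_right ?_
    simp only [Set.ofPred_forall]
    refine isClosed_iInter fun i => isClosed_iInter fun j => isClosed_iInter fun _ => ?_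
    exact isClosed_le continuous_const (by fun_prop)
  set G : (Fin (n+1) → ℝ) → ℝ := fun v =>
    ∑ i, |(∏ j ∈ Finset.univ.erase i, (v i - v j))⁻¹| - a * ∑ i, v i with hG
  have hKinj : ∀ v ∈ K, Function.Injective v := by
    intro v hv i j hij
    by_contra hne
    have := hv.2 i j hne
    rw [hij, sub_self, abs_zero] at this
    linarith
  have hGc : ContinuousOn G K := by
    apply ContinuousOn.sub
    · refine continuousOn_finsetSum _ fun i _ => ContinuousOn.abs (ContinuousOn.inv₀ ?_ ?_)
      · apply Continuous.continuousOn; fun_prop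
      · intro v hv
        rw [Finset.prod_ne_zero_iff]
        intro j hj
        exact sub_ne_zero.2 fun e => Finset.ne_of_mem_erase hj (hKinj v hv e).symm
    · apply Continuous.continuousOn; fun_prop
  have hGF : ∀ v : Fin (n+1) → ℝ, Function.Injective v → F (Finset.univ.image v) = G v := by
    intro v hv
    simp only [hF, hG, DD, wt]
    rw [Finset.sum_image hv.injOn, Finset.sum_image hv.injOn]
    congr 1
    refine Finset.sum_congr rfl fun i _ => ?_
    rw [← Finset.image_erase hv, Finset.prod_image hv.injOn]
  have hrep : ∀ S : Finset ℝ, S.card = n + 1 → (∀ x ∈ S, x ∈ Icc (-1:ℝ) 1) → F S ≤ F τ →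
      ∃ v ∈ K, G v = F S := by
    intro S h1 h2 h3
    have hv : Function.Injective (S.orderEmbOfFin h1) := (S.orderEmbOfFin h1).injective
    have him : Finset.univ.image (S.orderEmbOfFin h1) = S := by
      ext x
      have := Finset.range_orderEmbOfFin S h1
      rw [Set.ext_iff] at this
      simp
    refine ⟨S.orderEmbOfFin h1, ⟨?_, ?_⟩, ?_⟩
    · intro i _
      exact h2 _ (Finset.orderEmbOfFin_mem S h1 i)
    · intro i j hij
      exact hsep S h1 h2 h3 _ (Finset.orderEmbOfFin_mem S h1 i) _
        (Finset.orderEmbOfFin_mem S h1 j) (fun e => hij (hv e))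
    · rw [← hGF _ hv, him]
  obtain ⟨vτ, hvτ, hGτ⟩ := hrep τ hτ hτI le_rfl
  obtain ⟨v, hv, hvmin⟩ := hKc.exists_isMinOn ⟨vτ, hvτ⟩ hGc
  have hvinj := hKinj v hv
  refine ⟨Finset.univ.image v, ?_, ?_, ?_⟩
  · rw [Finset.card_image_of_injective _ hvinj]; simp
  · intro x hx
    rw [Finset.mem_image] at hx
    obtain ⟨i, -, rfl⟩ := hx
    exact hv.1 i (Set.mem_univ _)
  · intro S' h1 h2
    change F _ ≤ F S'
    rw [hGF v hvinj]
    by_cases h3 : F S' ≤ F τ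
    · obtain ⟨u, hu, hGu⟩ := hrep S' h1 h2 h3
      rw [← hGu]; exact hvmin hu
    · have : G v ≤ G vτ := hvmin hvτ
      linarith

/-- Optimal pair: nodes and polynomial. -/
lemma exists_pair (n : ℕ) (a : ℝ) (ha0 : 0 ≤ a) (ha : a ≤ 2 ^ n) :
    ∃ (S : Finset ℝ) (p : ℝ[X]), S.card = n + 1 ∧ (∀ x ∈ S, x ∈ Icc (-1:ℝ) 1) ∧
      ∑ x ∈ S, x ≤ 1 ∧ p.natDegree ≤ n + 1 ∧ p.coeff (n+1) = a ∧
      p.coeff n = DD S - a * ∑ x ∈ S, x ∧ ∀ x ∈ Icc (-1:ℝ) 1, |p.eval x| ≤ 1 := by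
  obtain ⟨τ, hτ, hτI, hτ1, hτT⟩ := exists_cheb_nodes n
  have hm := dd_mid τ n hτ _ (T_deg n).le
  rw [hτT, T_coeff] at hm
  rcases ha.lt_or_eq with hlt | rfl
  · obtain ⟨S, hS, hSI, hmin⟩ := exists_min n a ha0
    obtain ⟨p, h1, h2, h3, h4⟩ := exchange n a ha0 ha S hS hSI hmin
    refine ⟨S, p, hS, hSI, ?_, h1, h2, h3, h4⟩
    have e1 := hmin τ hτ hτI
    have e2 := dd_mid S n hS _ (T_deg n).le
    have e3 := (le_abs_self _).trans
      (dd_le_DD S (fun x => (Chebyshev.T ℝ ((n+1 : ℕ) : ℤ)).eval x)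
        (fun x hx => T_bound n x (hSI x hx)))
    rw [e2, T_coeff] at e3
    rw [hτ1] at e1 hm
    nlinarith
  · exact ⟨τ, _, hτ, hτI, hτ1.le, (T_deg n).le, T_coeff n, by linarith, T_bound n⟩


/-- One Rolle step on finite zero sets. -/
lemma rolle_step (F : ℝ → ℝ) (hF : DifferentiableOn ℝ F (Icc (-1:ℝ) 1)) (a b : ℝ)
    (hab : Icc a b ⊆ Icc (-1:ℝ) 1) (c : ℕ) (S : Finset ℝ) (hS : S.card = c + 1)
    (hSI : ∀ x ∈ S, x ∈ Icc a b) (h0 : ∀ x ∈ S, F x = 0) :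
    ∃ S' : Finset ℝ, S'.card = c ∧ (∀ x ∈ S', x ∈ Icc a b) ∧
      ∀ x ∈ S', derivWithin F (Icc (-1:ℝ) 1) x = 0 := by
  set e := S.orderEmbOfFin hS
  have he : ∀ i, e i ∈ S := Finset.orderEmbOfFin_mem S hS
  have hz : ∀ i : Fin c, ∃ z ∈ Ioo (e i.castSucc) (e i.succ),
      derivWithin F (Icc (-1:ℝ) 1) z = 0 := by
    intro i
    have hlt : e i.castSucc < e i.succ := e.strictMono Fin.castSucc_lt_succ
    have hsub : Icc (e i.castSucc) (e i.succ) ⊆ Icc (-1:ℝ) 1 :=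
      (Icc_subset_Icc (hSI _ (he _)).1 (hSI _ (he _)).2).trans hab
    obtain ⟨z, hz, hd⟩ := exists_deriv_eq_zero hlt (hF.continuousOn.mono hsub)
      (by rw [h0 _ (he _), h0 _ (he _)])
    refine ⟨z, hz, ?_⟩
    rw [derivWithin_of_mem_nhds, hd]
    exact Filter.mem_of_superset (Icc_mem_nhds hz.1 hz.2) hsub
  choose z hz hd using hz
  have hmono : StrictMono z := by
    intro i j hij
    have h1 : e i.succ ≤ e j.castSucc := e.monotone (by
      rw [Fin.le_def]; simp; omega)
    linarith [(hz i).2, (hz j).1]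
  refine ⟨Finset.univ.image z, ?_, ?_, ?_⟩
  · rw [Finset.card_image_of_injective _ hmono.injective]; simp
  · intro x hx
    rw [Finset.mem_image] at hx
    obtain ⟨i, -, rfl⟩ := hx
    exact ⟨(hSI _ (he _)).1.trans (hz i).1.le, (hz i).2.le.trans (hSI _ (he _)).2⟩
  · intro x hx
    rw [Finset.mem_image] at hx
    obtain ⟨i, -, rfl⟩ := hx
    exact hd i

lemma rolle_iter (n : ℕ) (f : ℝ → ℝ) (hf : NTimesDiffOn n f (Icc (-1:ℝ) 1)) (a b : ℝ)
    (hab : Icc a b ⊆ Icc (-1:ℝ) 1) (S : Finset ℝ) (hS : S.card = n + 1)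
    (hSI : ∀ x ∈ S, x ∈ Icc a b) (h0 : ∀ x ∈ S, f x = 0) :
    ∃ ξ ∈ Icc a b, iteratedDerivWithin n f (Icc (-1:ℝ) 1) ξ = 0 := by
  have key : ∀ k ≤ n, ∃ S' : Finset ℝ, S'.card = n - k + 1 ∧ (∀ x ∈ S', x ∈ Icc a b) ∧
      ∀ x ∈ S', iteratedDerivWithin k f (Icc (-1:ℝ) 1) x = 0 := by
    intro k
    induction k with
    | zero => intro _; exact ⟨S, by simpa using hS, hSI, by simpa using h0⟩
    | succ k ih =>
      intro hk
      obtain ⟨S', h1, h2, h3⟩ := ih (by omega)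
      obtain ⟨S'', h4, h5, h6⟩ := rolle_step _ (hf k (by omega)) a b hab (n - k) S' h1 h2 h3
      refine ⟨S'', by omega, h5, ?_⟩
      rw [iteratedDerivWithin_succ]
      exact h6
  obtain ⟨S', h1, h2, h3⟩ := key n le_rfl
  obtain ⟨x, hx⟩ := Finset.card_pos.1 (show 0 < S'.card by omega)
  exact ⟨x, h2 x hx, h3 x hx⟩

lemma iter_add_poly (n : ℕ) (f : ℝ → ℝ) (hf : NTimesDiffOn n f (Icc (-1:ℝ) 1)) (P : ℝ[X]) :
    ∀ k ≤ n, EqOn (iteratedDerivWithin k (fun x => f x + P.eval x) (Icc (-1:ℝ) 1))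
      (fun x => iteratedDerivWithin k f (Icc (-1:ℝ) 1) x + (derivative^[k] P).eval x)
      (Icc (-1:ℝ) 1) := by
  intro k
  induction k with
  | zero => intro _ x _; simp
  | succ k ih =>
    intro hk x hx
    have hu : UniqueDiffWithinAt ℝ (Icc (-1:ℝ) 1) x := uniqueDiffOn_Icc (by norm_num) x hx
    rw [iteratedDerivWithin_succ, derivWithin_congr (ih (by omega)) (ih (by omega) hx)]
    beta_reduce
    rw [derivWithin_fun_add (hf k (by omega) x hx) (Polynomial.differentiableWithinAt _),
      Polynomial.derivWithin _ hu, iteratedDerivWithin_succ, Function.iterate_succ_apply']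

lemma nTimes_add_poly (n : ℕ) (f : ℝ → ℝ) (hf : NTimesDiffOn n f (Icc (-1:ℝ) 1)) (P : ℝ[X]) :
    NTimesDiffOn n (fun x => f x + P.eval x) (Icc (-1:ℝ) 1) := by
  intro i hi
  refine DifferentiableOn.congr ?_ (iter_add_poly n f hf P i hi.le)
  exact (hf i hi).add (Polynomial.differentiableOn _)

lemma nTimes_zero (n : ℕ) : NTimesDiffOn n (fun _ => (0:ℝ)) (Icc (-1:ℝ) 1) := by
  intro i _
  have : iteratedDerivWithin i (fun _ => (0:ℝ)) (Icc (-1:ℝ) 1) = fun _ => 0 := by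
    ext x; simp
  rw [this]
  exact differentiableOn_const _

lemma iterate_deriv_eval (P : ℝ[X]) (n : ℕ) (hP : P.natDegree ≤ n + 2) (x : ℝ) :
    (derivative^[n] P).eval x = n.factorial * P.coeff n +
      (n+1).factorial * P.coeff (n+1) * x + (n+2).factorial * P.coeff (n+2) / 2 * x^2 := by
  have hd : (derivative^[n] P).natDegree < 3 := by
    have := natDegree_iterate_derivative P n
    omega
  rw [eval_eq_sum_range' hd]
  simp only [Finset.sum_range_succ, Finset.sum_range_zero, coeff_iterate_derivative]
  have e0 : ((0 + n).descFactorial n) = n.factorial := by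
    rw [zero_add, Nat.descFactorial_self]
  have e1 : ((1 + n).descFactorial n) = (n+1).factorial := by
    have := Nat.factorial_mul_descFactorial (show n ≤ 1 + n by omega)
    rw [Nat.add_sub_cancel] at this
    rw [Nat.add_comm n 1, ← this]; simp
  have e2 : (2:ℝ) * ((2 + n).descFactorial n : ℕ) = (n+2).factorial := by
    have := Nat.factorial_mul_descFactorial (show n ≤ 2 + n by omega)
    rw [Nat.add_sub_cancel] at this
    rw [Nat.add_comm n 2, ← this]; simp
  rw [e0, e1, ← e2]
  simp only [nsmul_eq_mul, zero_add, Nat.add_comm 1 n, Nat.add_comm 2 n]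
  ring

/-- Upper bound through a quadratic majorant. -/
lemma upper (n : ℕ) (σ : ℝ) (hσ : 0 ≤ σ) (f : ℝ → ℝ) (hf : memW (n+1) σ f)
    (S : Finset ℝ) (hS : S.card = n + 1) (a b : ℝ) (hab : Icc a b ⊆ Icc (-1:ℝ) 1)
    (hSI : ∀ x ∈ S, x ∈ Icc a b) (x0 : ℝ) (hx0 : x0 ∈ Icc (-1:ℝ) 1) (α β γ : ℝ)
    (hq : ∀ t ∈ Icc a b, |x0 - t| ≤ α + β * t + γ * t^2) :
    iteratedDerivWithin n f (Icc (-1:ℝ) 1) x0 ≤ n.factorial * DD S +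
      σ * (α + β * (∑ x ∈ S, x) / (n+1) +
        γ * ((∑ x ∈ S, x)^2 + ∑ x ∈ S, x^2) / ((n+1)*(n+2))) := by
  obtain ⟨hd, hb, hbn⟩ := hf
  have hd' : NTimesDiffOn n f (Icc (-1:ℝ) 1) := fun i hi => hd i (by omega)
  have hfac : (n.factorial : ℝ) ≠ 0 := by positivity
  set s := ∑ x ∈ S, x
  set s2 := ∑ x ∈ S, x^2
  set Q : ℝ[X] := C (α / n.factorial) * X^n + C (β / (n+1).factorial) * X^(n+1) +
    C (2 * γ / (n+2).factorial) * X^(n+2) with hQ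
  have hQd : Q.natDegree ≤ n + 2 := by
    rw [hQ]
    refine natDegree_add_le_of_degree_le (natDegree_add_le_of_degree_le ?_ ?_) ?_
    · exact (natDegree_C_mul_X_pow_le _ _).trans (by omega)
    · exact (natDegree_C_mul_X_pow_le _ _).trans (by omega)
    · exact (natDegree_C_mul_X_pow_le _ _).trans (by omega)
  have c0 : Q.coeff n = α / n.factorial := by
    simp [hQ, coeff_X_pow]
  have c1 : Q.coeff (n+1) = β / (n+1).factorial := by
    simp [hQ, coeff_X_pow]
  have c2 : Q.coeff (n+2) = 2 * γ / (n+2).factorial := by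
    simp [hQ, coeff_X_pow]
  have hQe : ∀ t, (derivative^[n] Q).eval t = α + β * t + γ * t^2 := by
    intro t
    rw [iterate_deriv_eval Q n hQd, c0, c1, c2]
    have := Nat.factorial_ne_zero (n+1)
    have := Nat.factorial_ne_zero (n+2)
    field_simp
  have hinj : Set.InjOn (id : ℝ → ℝ) S := Function.injective_id.injOn
  set r : ℝ → ℝ := fun x => f x + σ * Q.eval x with hr
  set L := Lagrange.interpolate S id r with hL
  have hLd : L.degree < S.card := Lagrange.degree_interpolate_lt _ hinj
  have hLe : ∀ x ∈ S, L.eval x = r x := fun x hx =>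
    Lagrange.eval_interpolate_at_node (v := id) _ hinj hx
  have hLn : L.natDegree ≤ n := by
    have h := Lagrange.degree_interpolate_le (s := S) (v := id) r hinj
    rw [hS, Nat.add_sub_cancel] at h
    exact natDegree_le_of_degree_le h
  have hLc : L.coeff n = dd S f + σ * dd S (fun x => Q.eval x) := by
    have := dd_low S L hLd
    rw [hS, Nat.add_sub_cancel] at this
    rw [← this, ← dd_smul, ← dd_add]
    exact Finset.sum_congr rfl fun x hx => by beta_reduce; rw [hLe x hx]
  have hLder : ∀ t, (derivative^[n] L).eval t = n.factorial * L.coeff n := by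
    intro t
    rw [iterate_deriv_eval L n (by omega), coeff_eq_zero_of_natDegree_lt (n := n+1) (by omega),
      coeff_eq_zero_of_natDegree_lt (n := n+2) (by omega)]
    ring
  obtain ⟨ξ, hξ, hξ0⟩ := rolle_iter n _ (nTimes_add_poly n f hd' (C σ * Q - L)) a b hab S hS hSI
    (by
      intro x hx
      rw [eval_sub, hLe x hx, eval_mul, eval_C, hr]; ring)
  rw [iter_add_poly n f hd' _ n le_rfl (hab hξ)] at hξ0
  beta_reduce at hξ0
  rw [iterate_derivative_sub, iterate_derivative_C_mul, eval_sub, eval_mul, eval_C, hQe, hLder, hLc,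
    dd_high S n hS Q hQd, c0, c1, c2] at hξ0
  have hlip : ‖iteratedDerivWithin n f (Icc (-1:ℝ) 1) x0 -
      iteratedDerivWithin n f (Icc (-1:ℝ) 1) ξ‖ ≤ σ * ‖x0 - ξ‖ := by
    refine Convex.norm_image_sub_le_of_norm_derivWithin_le (hd n (by omega)) ?_
      (convex_Icc _ _) (hab hξ) hx0
    intro y hy
    rw [← iteratedDerivWithin_succ]
    exact hbn y hy
  rw [Real.norm_eq_abs, Real.norm_eq_abs] at hlip
  have h1 := (le_abs_self _).trans hlip
  have h2 := mul_le_mul_of_nonneg_left (hq ξ hξ) hσ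
  have h3 := (le_abs_self _).trans (dd_le_DD S f (fun x hx => hb x (hab (hSI x hx))))
  have h4 : (n.factorial : ℝ) * dd S f ≤ n.factorial * DD S :=
    mul_le_mul_of_nonneg_left h3 (by positivity)
  have h5 : (n.factorial : ℝ) * (dd S f + σ * (α / n.factorial + β / (n+1).factorial * s +
      2 * γ / (n+2).factorial * ((s^2 + s2) / 2))) = n.factorial * dd S f +
      σ * (α + β * s / (n+1) + γ * (s^2 + s2) / ((n+1)*(n+2))) := by
    rw [Nat.factorial_succ (n+1), Nat.factorial_succ n]
    push_cast
    field_simp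
    ring
  linarith

lemma upper_half (n : ℕ) (hn : 1 ≤ n) (σ : ℝ) (hσ : 0 ≤ σ) (f : ℝ → ℝ) (hf : memW (n+1) σ f)
    (S : Finset ℝ) (hS : S.card = n + 1) (hSI : ∀ x ∈ S, x ∈ Icc (-1:ℝ) 1)
    (hs : ∑ x ∈ S, x ≤ 1) (x0 : ℝ) (hx0 : x0 ∈ Icc (0:ℝ) 1) :
    iteratedDerivWithin n f (Icc (-1:ℝ) 1) x0 ≤ n.factorial * DD S +
      σ * (1 - (∑ x ∈ S, x) / (n+1)) := by
  obtain ⟨hx, hx'⟩ := hx0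
  have hx0 : x0 ∈ Icc (-1:ℝ) 1 := ⟨by linarith, hx'⟩
  have fin : ∀ a b : ℝ, Icc a b ⊆ Icc (-1:ℝ) 1 → (∀ x ∈ S, x ∈ Icc a b) → ∀ α β γ : ℝ,
      (∀ t ∈ Icc a b, |t| ≤ α + β * t + γ * t^2) →
      α + β * (∑ x ∈ S, x) / (n+1) +
        γ * ((∑ x ∈ S, x)^2 + ∑ x ∈ S, x^2) / ((n+1)*(n+2)) ≤ 1 - (∑ x ∈ S, x) / (n+1) →
      iteratedDerivWithin n f (Icc (-1:ℝ) 1) x0 ≤ n.factorial * DD S +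
      σ * (1 - (∑ x ∈ S, x) / (n+1)) := by
    intro a b hab hSab α β γ hq hE
    have h := upper n σ hσ f hf S hS a b hab hSab x0 hx0
      ((1-x0)*α + x0) ((1-x0)*β - x0) ((1-x0)*γ) (by
        intro t ht
        have h1 := hq t ht
        have h2 := hab ht
        have h3 : |x0 - t| ≤ (1-x0)*|t| + x0*(1-t) := by
          rw [abs_le]
          constructor <;> nlinarith [neg_abs_le t, le_abs_self t, h2.1, h2.2, abs_nonneg t]
        have h4 := mul_le_mul_of_nonneg_left h1 (show 0 ≤ 1 - x0 by linarith)
        linarith)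
    refine h.trans ?_
    gcongr
    have h4 := mul_le_mul_of_nonneg_left hE (show 0 ≤ 1 - x0 by linarith)
    set u := ∑ x ∈ S, x
    set v := (u^2 + ∑ x ∈ S, x^2)
    have e : (1-x0)*α + x0 + ((1-x0)*β - x0) * u / (n+1) + (1-x0)*γ * v / ((n+1)*(n+2)) =
      (1-x0) * (α + β * u / (n+1) + γ * v / ((n+1)*(n+2))) + x0 * (1 - u / (n+1)) := by ring
    rw [e]
    linarith
  rcases Nat.lt_or_ge n 2 with h2 | h2
  · obtain rfl : n = 1 := by omega
    obtain ⟨a, b, hne, rfl⟩ := Finset.card_eq_two.1 hS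
    clear hS
    wlog hab : a < b generalizing a b
    · have := this b a hne.symm
      rw [Finset.pair_comm b a] at this
      exact this hSI hs fin (lt_of_le_of_ne (not_lt.1 hab) hne.symm)
    have ha := hSI a (by simp)
    have hb := hSI b (by simp)
    have hsub : Icc a b ⊆ Icc (-1:ℝ) 1 := Icc_subset_Icc ha.1 hb.2
    have hmem : ∀ x ∈ ({a, b} : Finset ℝ), x ∈ Icc a b := by
      intro x hx
      simp only [Finset.mem_insert, Finset.mem_singleton] at hx
      rcases hx with rfl | rfl
      · exact ⟨le_rfl, hab.le⟩
      · exact ⟨hab.le, le_rfl⟩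
    have hsum : ∑ x ∈ ({a, b} : Finset ℝ), x = a + b := Finset.sum_pair hne
    rw [hsum] at hs
    rcases le_total 0 a with ha0 | ha0
    · refine fin a b hsub hmem 0 1 0 ?_ ?_
      · intro t ht
        rw [abs_of_nonneg (ha0.trans ht.1)]; linarith
      · rw [hsum]; push_cast; linarith
    · rcases le_total b 0 with hb0 | hb0
      · refine fin a b hsub hmem 0 (-1) 0 ?_ ?_
        · intro t ht
          rw [abs_of_nonpos (ht.2.trans hb0)]; linarith
        · rw [hsum]; push_cast; linarith
      · have hba : 0 < b - a := by linarith
        set κ := 2 * b / (b - a) with hκ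
        have hκ' : κ * (b - a) = 2 * b := by rw [hκ]; field_simp
        have hκ0 : 0 ≤ κ := by rw [hκ]; positivity
        refine fin a b hsub hmem (-κ * a) (κ - 1) 0 ?_ ?_
        · intro t ht
          rw [abs_le]
          constructor
          · nlinarith [mul_nonneg hκ0 (sub_nonneg.2 ht.1)]
          · have h1 : 0 ≤ (2 * (t - a) * b - 2 * t * (b - a)) := by nlinarith [ht.2]
            have : κ * (t - a) - 2 * t = (2 * (t - a) * b - 2 * t * (b - a)) / (b - a) := by
              rw [hκ]; field_simp
            have : 0 ≤ κ * (t - a) - 2 * t := this ▸ div_nonneg h1 hba.le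
            linarith
        · rw [hsum]; push_cast; linarith [hb.2]
  · refine fin (-1) 1 subset_rfl hSI (1/2) 0 (1/2) ?_ ?_
    · intro t ht
      rw [← sq_abs]
      nlinarith [sq_nonneg (|t| - 1)]
    · have hs2 : ∑ x ∈ S, x^2 ≤ n + 1 := by
        have := Finset.sum_le_card_nsmul S (fun x => x^2) 1
          (fun x hx => by have := hSI x hx; nlinarith [this.1, this.2])
        rw [hS] at this
        simpa using this
      have hsl : -(n+1:ℝ) ≤ ∑ x ∈ S, x := by
        have := Finset.card_nsmul_le_sum S (fun x => x) (-1) (fun x hx => (hSI x hx).1)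
        rw [hS] at this
        simp at this
        linarith
      set u := ∑ x ∈ S, x
      set v := ∑ x ∈ S, x^2
      have hn' : (2:ℝ) ≤ n := by exact_mod_cast h2
      have key : u^2 + v + 2*(n+2)*u ≤ (n+1)*(n+2) := by nlinarith
      have : 1 - u/(n+1) - (1/2 + 0 * u / (n+1) + 1/2 * (u^2+v) / ((n+1)*(n+2))) =
        ((n+1)*(n+2) - (u^2 + v + 2*(n+2)*u)) / (2*((n+1)*(n+2))) := by
        field_simp; ring
      have h0 : 0 ≤ ((n+1:ℝ)*(n+2) - (u^2 + v + 2*(n+2)*u)) / (2*((n+1)*(n+2))) :=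
        div_nonneg (by linarith) (by positivity)
      linarith

lemma memW_neg (n : ℕ) (σ : ℝ) (f : ℝ → ℝ) (hf : memW n σ f) : memW n σ (fun x => - f x) := by
  obtain ⟨h1, h2, h3⟩ := hf
  have e : ∀ i, iteratedDerivWithin i (fun x => - f x) (Icc (-1:ℝ) 1) =
      fun x => - iteratedDerivWithin i f (Icc (-1:ℝ) 1) x := by
    intro i; ext x; exact iteratedDerivWithin_fun_neg f
  refine ⟨?_, ?_, ?_⟩
  · intro i hi; rw [e]; exact (h1 i hi).neg
  · intro x hx; rw [abs_neg]; exact h2 x hx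
  · intro x hx; rw [e, abs_neg]; exact h3 x hx

open scoped Pointwise in
lemma iter_refl (f : ℝ → ℝ) (i : ℕ) :
    iteratedDerivWithin i (fun x => f (-x)) (Icc (-1:ℝ) 1) =
      fun x => (-1)^i * iteratedDerivWithin i f (Icc (-1:ℝ) 1) (-x) := by
  ext x
  rw [iteratedDerivWithin_comp_neg, smul_eq_mul]
  have : -(Icc (-1:ℝ) 1) = Icc (-1:ℝ) 1 := by simp
  rw [this]

lemma neg_mem_I {x : ℝ} (hx : x ∈ Icc (-1:ℝ) 1) : -x ∈ Icc (-1:ℝ) 1 :=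
  ⟨by linarith [hx.2], by linarith [hx.1]⟩

lemma memW_refl (n : ℕ) (σ : ℝ) (f : ℝ → ℝ) (hf : memW n σ f) : memW n σ (fun x => f (-x)) := by
  obtain ⟨h1, h2, h3⟩ := hf
  refine ⟨?_, ?_, ?_⟩
  · intro i hi
    rw [iter_refl]
    exact ((h1 i hi).comp differentiableOn_id.neg (fun x hx => neg_mem_I hx)).const_mul _
  · intro x hx; exact h2 _ (neg_mem_I hx)
  · intro x hx; rw [iter_refl, abs_mul, abs_pow]; simpa using h3 _ (neg_mem_I hx)

lemma memW_poly (n : ℕ) (σ : ℝ) (hσ : 0 ≤ σ) (p : ℝ[X]) (hd : p.natDegree ≤ n + 1)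
    (hc : p.coeff (n+1) = σ / (n+1).factorial) (hb : ∀ x ∈ Icc (-1:ℝ) 1, |p.eval x| ≤ 1) :
    memW (n+1) σ (fun x => 0 + p.eval x) := by
  refine ⟨nTimes_add_poly _ _ (nTimes_zero _) p, fun x hx => by simpa using hb x hx, ?_⟩
  intro x hx
  rw [iter_add_poly (n+1) _ (nTimes_zero _) p (n+1) le_rfl hx]
  beta_reduce
  rw [iterate_deriv_eval p (n+1) (by omega), hc,
    coeff_eq_zero_of_natDegree_lt (n := n+1+1) (by omega),
    coeff_eq_zero_of_natDegree_lt (n := n+1+2) (by omega)]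
  have := Nat.factorial_ne_zero (n+1)
  have e : ((n+1).factorial : ℝ) * (σ / (n+1).factorial) = σ := by field_simp
  rw [e]
  simp [abs_of_nonneg hσ]

end Karlin

/-- Karlin's conjecture for `k = n-1` in the range `0 ≤ σ ≤ σ_n`. -/
theorem karlin_conjecture_k_eq_n_sub_one (n : ℕ) (σ : ℝ) (hn : 2 ≤ n)
    (hσ0 : 0 ≤ σ) (hσn : σ ≤ sigmaN n) :
    ∀ x ∈ Icc (-1:ℝ) 1, mval n (n-1) x σ ≤ mval n (n-1) 1 σ := by
  obtain ⟨n, rfl⟩ : ∃ k, n = k + 1 := ⟨n - 1, by omega⟩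
  rw [Nat.add_sub_cancel]
  have hfac : (0:ℝ) < (n+1).factorial := by positivity
  unfold sigmaN at hσn
  rw [Nat.add_sub_cancel] at hσn
  obtain ⟨S, p, hS, hSI, hs, hpd, hpc, hpc', hpb⟩ := Karlin.exists_pair n (σ / (n+1).factorial)
    (by positivity) (by rw [div_le_iff₀ hfac]; exact hσn)
  set Φ := n.factorial * Karlin.DD S + σ * (1 - (∑ x ∈ S, x) / (n+1)) with hΦ
  have hpW := Karlin.memW_poly n σ hσ0 p hpd hpc hpb
  have h1 : (1:ℝ) ∈ Icc (-1:ℝ) 1 := by constructor <;> norm_num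
  have hp1 : iteratedDerivWithin n (fun x => 0 + p.eval x) (Icc (-1:ℝ) 1) 1 = Φ := by
    rw [Karlin.iter_add_poly n _ (Karlin.nTimes_zero _) p n le_rfl h1]
    beta_reduce
    rw [Karlin.iterate_deriv_eval p n (by omega), hpc, hpc',
      coeff_eq_zero_of_natDegree_lt (n := n+2) (by omega), hΦ]
    rw [Nat.factorial_succ n]
    have := Nat.factorial_ne_zero n
    push_cast
    have hz : iteratedDerivWithin n (fun _ => (0:ℝ)) (Icc (-1:ℝ) 1) 1 = 0 := by simp
    rw [hz]
    field_simp
    ring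
  have hhalf : ∀ f, memW (n+1) σ f → ∀ x ∈ Icc (0:ℝ) 1,
      |iteratedDerivWithin n f (Icc (-1:ℝ) 1) x| ≤ Φ := by
    intro f hf x hx
    have e1 := Karlin.upper_half n (by omega) σ hσ0 f hf S hS hSI hs x hx
    have e2 := Karlin.upper_half n (by omega) σ hσ0 _ (Karlin.memW_neg _ _ f hf) S hS hSI hs x hx
    rw [iteratedDerivWithin_fun_neg] at e2
    rw [abs_le]
    constructor <;> linarith
  have hall : ∀ f, memW (n+1) σ f → ∀ x ∈ Icc (-1:ℝ) 1,
      |iteratedDerivWithin n f (Icc (-1:ℝ) 1) x| ≤ Φ := by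
    intro f hf x hx
    rcases le_total 0 x with h | h
    · exact hhalf f hf x ⟨h, hx.2⟩
    · have := hhalf _ (Karlin.memW_refl _ _ f hf) (-x) ⟨by linarith, by linarith [hx.1]⟩
      rw [Karlin.iter_refl, abs_mul, abs_pow] at this
      simpa using this
  intro x hx
  unfold mval
  refine csSup_le ⟨_, _, hpW, rfl⟩ ?_
  rintro y ⟨f, hf, rfl⟩
  refine (hall f hf x hx).trans ?_
  refine le_trans ?_ (le_csSup ⟨Φ, ?_⟩ ⟨_, hpW, rfl⟩)
  · rw [hp1]; exact le_abs_self _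
  · rintro y ⟨g, hg, rfl⟩
    exact hall g hg 1 h1
end

section
/- Let n ≥ 2 and 1 ≤ k ≤ n-1. Define the half-line constant B_{n,k} := sup{ |f^{(k)}(1)| : f : ℝ → ℝ is n times differentiable on (-∞,1], |f(x)| ≤ 1 for all x ≤ 1, and |f^{(n)}(x)| ≤ σ_n for all x ≤ 1 }. Then B_{n,k} ≥ (2/e)^{2k} · T_n^{(k)}(1). -/
open Polynomial Set

/-! ### The entire function `cos √s` and its derivatives -/

theorem hl_exists_contDiff : ∃ F : ℝ → ℝ, ContDiff ℝ (⊤ : ℕ∞) F ∧ ∀ w, F (w ^ 2) = Real.cos w := by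
  let c : ℕ → ℝ := fun m => (-1) ^ m / ((2 * m).factorial : ℝ)
  have hc0 : ∀ m, c m ≠ 0 := fun m => by
    simp only [c]
    exact div_ne_zero (pow_ne_zero _ (by norm_num)) (Nat.cast_ne_zero.mpr (Nat.factorial_ne_zero _))
  have hrad : (FormalMultilinearSeries.ofScalars ℝ c).radius = ⊤ := by
    apply FormalMultilinearSeries.ofScalars_radius_eq_top_of_tendsto
    · exact Filter.Eventually.of_forall hc0
    · have : (fun n : ℕ => ‖c n.succ‖ / ‖c n‖) = fun n : ℕ => 1 / (((2 * n + 1 : ℝ)) * (2 * n + 2)) := by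
        funext m
        have h1 : ((2 * m).factorial : ℝ) ≠ 0 := Nat.cast_ne_zero.mpr (Nat.factorial_ne_zero _)
        have h2 : ((2 * m.succ).factorial : ℝ) = (2 * m + 2) * ((2 * m + 1) * (2 * m).factorial) := by
          rw [show 2 * m.succ = 2 * m + 1 + 1 by omega, Nat.factorial_succ, Nat.factorial_succ]
          push_cast; ring
        simp only [c, norm_div, norm_pow, norm_neg, norm_one, one_pow, h2]
        rw [Real.norm_of_nonneg (by positivity), Real.norm_of_nonneg (by positivity)]
        field_simp
      rw [this]
      refine squeeze_zero (fun m => by positivity) (fun m => ?_) tendsto_one_div_add_atTop_nhds_zero_nat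
      apply one_div_le_one_div_of_le (by positivity)
      have : (0:ℝ) ≤ m := by positivity
      nlinarith
  have hps := (FormalMultilinearSeries.ofScalars ℝ c).hasFPowerSeriesOnBall (by rw [hrad]; simp)
  rw [hrad] at hps
  refine ⟨(FormalMultilinearSeries.ofScalars ℝ c).sum, ?_, fun w => ?_⟩
  · have h := hps.analyticOnNhd
    rw [← contDiffOn_univ]
    apply AnalyticOnNhd.contDiffOn_of_completeSpace
    intro x _
    exact h x (by simp)
  · have h1 : (FormalMultilinearSeries.ofScalars ℝ c).sum (w ^ 2) = ∑' m, c m • (w ^ 2) ^ m :=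
      FormalMultilinearSeries.ofScalars_sum_eq c (w ^ 2)
    rw [h1, ← (Real.hasSum_cos w).tsum_eq]
    apply tsum_congr
    intro m
    simp only [c, smul_eq_mul, pow_mul]
    ring

theorem hl_exists_chain : ∃ G : ℕ → ℝ → ℝ, (∀ j s, HasDerivAt (G j) (G (j + 1) s) s) ∧
    ∀ w, G 0 (w ^ 2) = Real.cos w := by
  obtain ⟨F, hF, hw⟩ := hl_exists_contDiff
  refine ⟨fun j => iteratedDeriv j F, fun j s => ?_, by simpa using hw⟩
  have hd : Differentiable ℝ (iteratedDeriv j F) :=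
    hF.differentiable_iteratedDeriv j (by exact_mod_cast ENat.natCast_lt_top j)
  show HasDerivAt (iteratedDeriv j F) (iteratedDeriv (j + 1) F s) s
  rw [iteratedDeriv_succ]
  exact (hd s).hasDerivAt

theorem hl_ode_pos {G : ℕ → ℝ → ℝ} (hG : ∀ j s, HasDerivAt (G j) (G (j + 1) s) s)
    (h0 : ∀ w, G 0 (w ^ 2) = Real.cos w) (j : ℕ) :
    ∀ s > 0, 4 * s * G (j + 2) s + (4 * j + 2) * G (j + 1) s + G j s = 0 := by
  induction j with
  | zero =>
    intro s hs
    have hsq : ∀ w : ℝ, HasDerivAt (fun w : ℝ => w ^ 2) (2 * w) w := fun w => by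
      simpa using hasDerivAt_pow 2 w
    have e1 : ∀ w, G 1 (w ^ 2) * (2 * w) = - Real.sin w := fun w => by
      have h1 := (hG 0 (w ^ 2)).comp w (hsq w)
      have h2 : G 0 ∘ (fun w : ℝ => w ^ 2) = Real.cos := funext h0
      rw [h2] at h1
      exact h1.unique (Real.hasDerivAt_cos w)
    have e2 : ∀ w, G 2 (w ^ 2) * (2 * w) * (2 * w) + G 1 (w ^ 2) * 2 = - Real.cos w := fun w => by
      have h1 := ((hG 1 (w ^ 2)).comp w (hsq w)).mul ((hasDerivAt_id w).const_mul 2)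
      have h2 : (G 1 ∘ (fun w : ℝ => w ^ 2)) * (fun w => 2 * id w) = fun w => - Real.sin w := by
        funext w; simpa using e1 w
      rw [h2] at h1
      have := h1.unique (Real.hasDerivAt_sin w).neg
      simpa using this
    have := e2 (Real.sqrt s)
    rw [← h0, Real.sq_sqrt hs.le] at this
    have h3 := Real.sq_sqrt hs.le
    push_cast
    try simp only [zero_add]
    linear_combination this + (-4 * G 2 s) * h3
  | succ j ih =>
    intro s hs
    have h1 := ((((hasDerivAt_id s).const_mul 4).mul (hG (j + 2) s)).add
      ((hG (j + 1) s).const_mul (4 * (j:ℝ) + 2))).add (hG j s)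
    have h2 := h1.congr_of_eventuallyEq (f₁ := fun _ => (0:ℝ)) (by
      filter_upwards [lt_mem_nhds hs] with t ht
      have := ih t ht
      simp only [Pi.add_apply, Pi.mul_apply, id]
      linarith)
    have := h2.unique (hasDerivAt_const s (0:ℝ))
    simp only [id] at this
    push_cast
    rw [show j + 1 + 2 = j + 2 + 1 by ring, show j + 1 + 1 = j + 2 by ring] at *
    linarith

theorem hl_ode {G : ℕ → ℝ → ℝ} (hG : ∀ j s, HasDerivAt (G j) (G (j + 1) s) s)
    (h0 : ∀ w, G 0 (w ^ 2) = Real.cos w) (j : ℕ) (s : ℝ) (hs : 0 ≤ s) :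
    4 * s * G (j + 2) s + (4 * j + 2) * G (j + 1) s + G j s = 0 := by
  have hc : ∀ j, Continuous (G j) := fun j =>
    continuous_iff_continuousAt.mpr fun s => (hG j s).continuousAt
  have hcl : IsClosed {s : ℝ | 4 * s * G (j + 2) s + (4 * j + 2) * G (j + 1) s + G j s = 0} := by
    apply isClosed_eq _ continuous_const
    have := hc (j + 2); have := hc (j + 1); have := hc j
    fun_prop
  have hsub : Set.Ioi (0:ℝ) ⊆ {s : ℝ | 4 * s * G (j + 2) s + (4 * j + 2) * G (j + 1) s + G j s = 0} :=
    fun s hs => hl_ode_pos hG h0 j s hs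
  have := closure_minimal hsub hcl
  rw [closure_Ioi] at this
  exact this hs

/-- `P j = (2j)!/j!`. -/
noncomputable def hlP (j : ℕ) : ℝ := ∏ l ∈ Finset.range j, (2 * (2 * (l:ℝ) + 1))

theorem hlP_pos (j : ℕ) : 0 < hlP j := Finset.prod_pos fun l _ => by positivity

theorem hlP_succ (j : ℕ) : hlP (j + 1) = hlP j * (2 * (2 * (j:ℝ) + 1)) := by
  simp [hlP, Finset.prod_range_succ]

theorem hlP_fact (j : ℕ) : hlP j * j.factorial = (2 * j).factorial := by
  induction j with
  | zero => simp [hlP]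
  | succ j ih =>
    rw [hlP_succ, show 2 * (j + 1) = 2 * j + 1 + 1 by ring, Nat.factorial_succ, Nat.factorial_succ,
      Nat.factorial_succ]
    push_cast
    rw [← ih]; ring

theorem hl_bound {G : ℕ → ℝ → ℝ} (hG : ∀ j s, HasDerivAt (G j) (G (j + 1) s) s)
    (h0 : ∀ w, G 0 (w ^ 2) = Real.cos w) (j : ℕ) : ∀ s ≥ 0, |G j s| ≤ 1 / hlP j := by
  induction j with
  | zero =>
    intro s hs
    have := h0 (Real.sqrt s)
    rw [Real.sq_sqrt hs] at this
    simpa [hlP, this] using Real.abs_cos_le_one _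
  | succ j ih =>
    intro s hs
    have hP := hlP_pos j
    rcases hs.lt_or_eq with hs | rfl
    · set w := Real.sqrt s with hw
      have hwpos : 0 < w := Real.sqrt_pos.mpr hs
      have hsq : ∀ w : ℝ, HasDerivAt (fun w : ℝ => w ^ 2) (2 * w) w := fun w => by
        simpa using hasDerivAt_pow 2 w
      have hf : ∀ v : ℝ, HasDerivAt (fun v : ℝ => v ^ (2 * j + 1) * G (j + 1) (v ^ 2))
          (- (v ^ (2 * j) * G j (v ^ 2) / 2)) v := fun v => by
        have h1 := (hasDerivAt_pow (2 * j + 1) v).mul ((hG (j + 1) (v ^ 2)).comp v (hsq v))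
        have h2 := hl_ode hG h0 j (v ^ 2) (sq_nonneg v)
        refine h1.congr_deriv ?_
        simp only [Function.comp, Nat.add_sub_cancel]
        push_cast
        rw [show j + 1 + 1 = j + 2 by ring]
        linear_combination (v ^ (2 * j) / 2) * h2
      have hB : ∀ v : ℝ, HasDerivAt (fun v : ℝ => v ^ (2 * j + 1) * (1 / hlP (j + 1)))
          (v ^ (2 * j) * (1 / hlP j) / 2) v := fun v => by
        refine ((hasDerivAt_pow (2 * j + 1) v).mul_const _).congr_deriv ?_
        rw [hlP_succ]
        push_cast
        field_simp
      have key := image_norm_le_of_norm_deriv_right_le_deriv_boundary (a := 0) (b := w)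
        (fun v _ => (hf v).continuousAt.continuousWithinAt)
        (fun v _ => (hf v).hasDerivWithinAt) (by simp) hB (fun v _ => by
          have hv : 0 ≤ v ^ (2 * j) := by rw [pow_mul]; positivity
          rw [norm_neg, Real.norm_eq_abs, abs_div, abs_mul, abs_of_nonneg hv, abs_two]
          have := ih (v ^ 2) (sq_nonneg v)
          gcongr) (Set.right_mem_Icc.mpr hwpos.le)
      rw [Real.norm_eq_abs, abs_mul, abs_of_pos (pow_pos hwpos _), Real.sq_sqrt hs.le] at key
      exact le_of_mul_le_mul_left key (pow_pos hwpos _)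
    · have h2 := hl_ode hG h0 j 0 le_rfl
      have h3 := ih 0 le_rfl
      have h4 : G j 0 = - (2 * (2 * (j:ℝ) + 1)) * G (j + 1) 0 := by linarith
      rw [h4, abs_mul, abs_neg, abs_of_pos (by positivity : (0:ℝ) < 2 * (2 * (j:ℝ) + 1))] at h3
      rw [hlP_succ]
      rw [le_div_iff₀ hP] at h3
      rw [le_div_iff₀ (by positivity)]
      linarith

theorem hl_zero {G : ℕ → ℝ → ℝ} (hG : ∀ j s, HasDerivAt (G j) (G (j + 1) s) s)
    (h0 : ∀ w, G 0 (w ^ 2) = Real.cos w) (j : ℕ) : |G j 0| * hlP j = 1 := by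
  induction j with
  | zero =>
    have := h0 0
    simp at this
    simp [this, hlP]
  | succ j ih =>
    have h2 := hl_ode hG h0 j 0 le_rfl
    have h4 : G j 0 = - (2 * (2 * (j:ℝ) + 1)) * G (j + 1) 0 := by linarith
    rw [h4, abs_mul, abs_neg, abs_of_pos (by positivity : (0:ℝ) < 2 * (2 * (j:ℝ) + 1))] at ih
    rw [hlP_succ]
    linarith


/-! ### Finiteness of the supremum -/

theorem hl_small (m : ℕ) : ∀ (G : ℕ → ℝ → ℝ) (A : ℝ),
    (∀ i < m, ∀ x ≤ 1, HasDerivWithinAt (G i) (G (i + 1) x) (Set.Iic 1) x) →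
    (∀ x ≤ 1, |G 0 x| ≤ A) → ∀ x : ℝ, x ≤ 1 → ∃ y : ℝ, y ≤ x ∧ x - m ≤ y ∧ |G m y| ≤ 2 ^ m * A := by
  induction m with
  | zero => intro G A _ hA x hx; exact ⟨x, le_rfl, by simp, by simpa using hA x hx⟩
  | succ m ih =>
    intro G A hG hA x hx
    obtain ⟨y, hyx, hy, hb⟩ := ih (fun i x => G i x - G i (x - 1)) (2 * A) (by
      intro i hi x hx
      refine (hG i (by omega) x hx).sub ?_
      have h1 := hG i (by omega) (x - 1) (by linarith)
      have h2 : HasDerivWithinAt (fun x : ℝ => x - 1) 1 (Set.Iic 1) x :=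
        ((hasDerivAt_id x).sub_const 1).hasDerivWithinAt
      have := h1.comp x h2 (fun t ht => by
        simp only [Set.mem_Iic] at *; linarith)
      simpa [Function.comp_def] using this) (by
      intro x hx
      have h1 := hA x hx
      have h2 := hA (x - 1) (by linarith)
      have := abs_sub (G 0 x) (G 0 (x - 1))
      linarith) x hx
    obtain ⟨z, hz, hzz⟩ := exists_hasDerivAt_eq_slope (G m) (G (m + 1)) (a := y - 1) (b := y)
      (by linarith) (fun t ht => by
        have : t ≤ 1 := by linarith [ht.2]
        exact (hG m (by omega) t this).continuousWithinAt.mono (fun u hu => by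
          simp only [Set.mem_Iic]; linarith [hu.2])) (fun t ht => by
        have : t < 1 := by linarith [ht.2]
        exact (hG m (by omega) t this.le).hasDerivAt (Iic_mem_nhds this))
    refine ⟨z, by linarith [hz.2], ?_, ?_⟩
    · push_cast; linarith [hz.1]
    · rw [hzz, show y - (y - 1) = 1 by ring, div_one, pow_succ, mul_assoc]
      exact hb

theorem hl_bdd (n : ℕ) (A B : ℝ) (j : ℕ) : j ≤ n → ∃ C : ℝ, ∀ G : ℕ → ℝ → ℝ,
    (∀ i < n, ∀ x ≤ 1, HasDerivWithinAt (G i) (G (i + 1) x) (Set.Iic 1) x) →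
    (∀ x ≤ 1, |G 0 x| ≤ A) → (∀ x ≤ 1, |G n x| ≤ B) → ∀ x ≤ 1, |G (n - j) x| ≤ C := by
  induction j with
  | zero => intro _; exact ⟨B, fun G _ _ h => by simpa using h⟩
  | succ j ih =>
    intro hj
    obtain ⟨C, hC⟩ := ih (by omega)
    refine ⟨2 ^ (n - (j + 1)) * A + C * (n - (j + 1) : ℕ), fun G hG h0 hn x hx => ?_⟩
    obtain ⟨y, hyx, hy, hb⟩ := hl_small (n - (j + 1)) G A (fun i hi => hG i (by omega)) h0 x hx
    have hC' := hC G hG h0 hn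
    have hd := hG (n - (j + 1)) (by omega)
    rw [show n - (j + 1) + 1 = n - j by omega] at hd
    have hmv := Convex.norm_image_sub_le_of_norm_hasDerivWithin_le (s := Set.Iic (1:ℝ))
      (fun x hx => hd x hx) (fun x hx => hC' x hx) (convex_Iic 1)
      (show y ∈ Set.Iic (1:ℝ) from hyx.trans hx) (show x ∈ Set.Iic (1:ℝ) from hx)
    have hC0 : 0 ≤ C := (abs_nonneg _).trans (hC' x hx)
    rw [Real.norm_eq_abs, Real.norm_eq_abs, abs_of_nonneg (sub_nonneg.mpr hyx)] at hmv
    have h3 : C * (x - y) ≤ C * (n - (j + 1) : ℕ) := by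
      apply mul_le_mul_of_nonneg_left _ hC0; linarith
    have h4 := abs_sub_abs_le_abs_sub (G (n - (j + 1)) x) (G (n - (j + 1)) y)
    linarith

/-! ### The scaling constant -/

theorem hl_scale (n : ℕ) (hn : 2 ≤ n) : ∃ a : ℝ, 0 < a ∧ a ^ n = 2 ^ (n - 1) * ((2 * n).factorial : ℝ) ∧
    2 * (2 / Real.exp 1) ^ 2 * (n:ℝ) ^ 2 ≤ a := by
  have hpos : (0:ℝ) < 2 ^ (n - 1) * ((2 * n).factorial : ℝ) := by positivity
  refine ⟨(2 ^ (n - 1) * ((2 * n).factorial : ℝ)) ^ ((n:ℝ)⁻¹), Real.rpow_pos_of_pos hpos _,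
    Real.rpow_inv_natCast_pow hpos.le (by omega), ?_⟩
  apply le_of_pow_le_pow_left₀ (n := n) (by omega) (Real.rpow_nonneg hpos.le _)
  rw [Real.rpow_inv_natCast_pow hpos.le (by omega)]
  have hs := Stirling.le_factorial_stirling (2 * n)
  have h2 : (2:ℝ) ≤ √(2 * Real.pi * ((2 * n : ℕ) : ℝ)) := by
    apply Real.le_sqrt_of_sq_le
    have : (2:ℝ) ≤ n := by exact_mod_cast hn
    have := Real.pi_gt_three
    push_cast
    nlinarith
  have h3 : 2 * (((2 * n : ℕ) : ℝ) / Real.exp 1) ^ (2 * n) ≤ ((2 * n).factorial : ℝ) :=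
    le_trans (by gcongr) hs
  calc (2 * (2 / Real.exp 1) ^ 2 * (n:ℝ) ^ 2) ^ n
      = 2 ^ (n - 1) * (2 * (((2 * n : ℕ) : ℝ) / Real.exp 1) ^ (2 * n)) := by
        obtain ⟨m, rfl⟩ : ∃ m, n = m + 1 := ⟨n - 1, by omega⟩
        rw [pow_mul, ← mul_assoc, Nat.add_sub_cancel, ← pow_succ, ← mul_pow]
        congr 1
        push_cast
        ring
    _ ≤ _ := by gcongr

theorem hl_cheb (n k : ℕ) (hk : k ≤ n) : chebDeriv n k 1 * hlP k ≤ 2 ^ k * (n:ℝ) ^ (2 * k) := by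
  induction k with
  | zero => simp [chebDeriv, hlP]
  | succ k ih =>
    have h := Polynomial.Chebyshev.iterate_derivative_T_eval_one_recurrence (R := ℝ) (n:ℤ) k
    have ih := ih (by omega)
    change (2 * (k:ℝ) + 1) * chebDeriv n (k + 1) 1 = (((n:ℤ):ℝ) ^ 2 - (k:ℝ) ^ 2) * chebDeriv n k 1 at h
    have hkn : (k:ℝ) ^ 2 ≤ (n:ℝ) ^ 2 := by
      have : (k:ℝ) ≤ n := by exact_mod_cast (by omega : k ≤ n)
      gcongr
    push_cast at h
    rw [hlP_succ]
    calc chebDeriv n (k + 1) 1 * (hlP k * (2 * (2 * (k:ℝ) + 1)))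
        = 2 * ((n:ℝ) ^ 2 - (k:ℝ) ^ 2) * (chebDeriv n k 1 * hlP k) := by
          linear_combination (2 * hlP k) * h
      _ ≤ 2 * ((n:ℝ) ^ 2 - (k:ℝ) ^ 2) * (2 ^ k * (n:ℝ) ^ (2 * k)) := by
          apply mul_le_mul_of_nonneg_left ih; linarith
      _ ≤ 2 * (n:ℝ) ^ 2 * (2 ^ k * (n:ℝ) ^ (2 * k)) := by
          apply mul_le_mul_of_nonneg_right _ (by positivity)
          have := sq_nonneg (k:ℝ); linarith
      _ = _ := by ring

theorem hl_iter {G : ℕ → ℝ → ℝ} (hG : ∀ j s, HasDerivAt (G j) (G (j + 1) s) s) (a : ℝ) (i : ℕ) :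
    ∀ x ≤ 1, iteratedDerivWithin i (fun x => G 0 (a * (1 - x))) (Set.Iic (1:ℝ)) x =
      (-a) ^ i * G i (a * (1 - x)) ∧
      HasDerivWithinAt (iteratedDerivWithin i (fun x => G 0 (a * (1 - x))) (Set.Iic (1:ℝ)))
        ((-a) ^ (i + 1) * G (i + 1) (a * (1 - x))) (Set.Iic 1) x := by
  have hd : ∀ i x, HasDerivAt (fun x => (-a) ^ i * G i (a * (1 - x)))
      ((-a) ^ (i + 1) * G (i + 1) (a * (1 - x))) x := fun i x => by
    have h1 : HasDerivAt (fun x : ℝ => a * (1 - x)) (-a) x := by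
      simpa using ((hasDerivAt_id x).const_sub 1).const_mul a
    refine (((hG i (a * (1 - x))).comp x h1).const_mul ((-a) ^ i)).congr_deriv ?_
    ring
  have aux : ∀ i, (∀ x ≤ 1, iteratedDerivWithin i (fun x => G 0 (a * (1 - x))) (Set.Iic (1:ℝ)) x =
      (-a) ^ i * G i (a * (1 - x))) → ∀ x ≤ 1,
      HasDerivWithinAt (iteratedDerivWithin i (fun x => G 0 (a * (1 - x))) (Set.Iic (1:ℝ)))
        ((-a) ^ (i + 1) * G (i + 1) (a * (1 - x))) (Set.Iic 1) x := fun i h x hx =>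
    (hd i x).hasDerivWithinAt.congr (fun y hy => h y hy) (h x hx)
  suffices h : ∀ x ≤ 1, iteratedDerivWithin i (fun x => G 0 (a * (1 - x))) (Set.Iic (1:ℝ)) x =
      (-a) ^ i * G i (a * (1 - x)) from fun x hx => ⟨h x hx, aux i h x hx⟩
  induction i with
  | zero => intro x _; simp
  | succ i ih =>
    intro x hx
    rw [iteratedDerivWithin_succ]
    exact (aux i ih x hx).derivWithin (uniqueDiffOn_Iic 1 x hx)

/-- lower bound `(2/e)^{2k}·T_n^{(k)}(1)` for the half-line
Landau--Kolmogorov constant `B_{n,k}`. -/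
theorem halfline_constant_lower_bound (n k : ℕ) (hn : 2 ≤ n) (hk1 : 1 ≤ k)
    (hk2 : k ≤ n - 1) :
    (2 / Real.exp 1) ^ (2 * k) * chebDeriv n k 1 ≤
      sSup {y | ∃ f : ℝ → ℝ, NTimesDiffOn n f (Iic (1:ℝ)) ∧
        (∀ x ≤ (1:ℝ), |f x| ≤ 1) ∧
        (∀ x ≤ (1:ℝ), |iteratedDerivWithin n f (Iic (1:ℝ)) x| ≤ sigmaN n) ∧
        y = |iteratedDerivWithin k f (Iic (1:ℝ)) 1|} := by
  apply le_csSup_of_le (b := ?b)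
  case b =>
    exact |iteratedDerivWithin k (fun x => hl_exists_chain.choose 0 ((hl_scale n hn).choose * (1 - x)))
      (Iic (1:ℝ)) 1|
  · obtain ⟨C, hC⟩ := hl_bdd n 1 (sigmaN n) (n - k) (by omega)
    refine ⟨C, ?_⟩
    rintro y ⟨f, hf, hf0, hfn, rfl⟩
    have := hC (fun i => iteratedDerivWithin i f (Iic (1:ℝ))) (fun i hi x hx => by
      simp only [iteratedDerivWithin_succ]
      exact (hf i hi x hx).hasDerivWithinAt) (by simpa using hf0) hfn 1 le_rfl
    rwa [show n - (n - k) = k by omega] at this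
  · obtain ⟨hG, h0⟩ := hl_exists_chain.choose_spec
    obtain ⟨ha, han, -⟩ := (hl_scale n hn).choose_spec
    set G := hl_exists_chain.choose
    set a := (hl_scale n hn).choose
    have hiter := hl_iter hG a
    have hnn : ∀ x ≤ (1:ℝ), 0 ≤ a * (1 - x) := fun x hx => mul_nonneg ha.le (by linarith)
    refine ⟨_, fun i _ x hx => (hiter i x hx).2.differentiableWithinAt, fun x hx => ?_,
      fun x hx => ?_, rfl⟩
    · simpa [hlP] using hl_bound hG h0 0 _ (hnn x hx)
    · rw [(hiter n x hx).1, abs_mul, abs_pow, abs_neg, abs_of_pos ha, han]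
      have h1 := hl_bound hG h0 n _ (hnn x hx)
      have hP := hlP_pos n
      calc _ ≤ 2 ^ (n - 1) * ((2 * n).factorial : ℝ) * (1 / hlP n) := by gcongr
        _ = sigmaN n := by
          rw [← hlP_fact, sigmaN]; field_simp
  · obtain ⟨hG, h0⟩ := hl_exists_chain.choose_spec
    obtain ⟨ha, -, hle⟩ := (hl_scale n hn).choose_spec
    set G := hl_exists_chain.choose
    set a := (hl_scale n hn).choose
    rw [(hl_iter hG a k 1 le_rfl).1, abs_mul, abs_pow, abs_neg, abs_of_pos ha, sub_self, mul_zero]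
    have hz := hl_zero hG h0 k
    have hc := hl_cheb n k (by omega)
    have hP := hlP_pos k
    refine le_of_mul_le_mul_right ?_ hP
    rw [mul_assoc, mul_assoc, hz, mul_one]
    calc _ ≤ (2 / Real.exp 1) ^ (2 * k) * (2 ^ k * (n:ℝ) ^ (2 * k)) := by gcongr
      _ = (2 * (2 / Real.exp 1) ^ 2 * (n:ℝ) ^ 2) ^ k := by
        rw [pow_mul, pow_mul, ← mul_pow, ← mul_pow]; congr 1; ring
      _ ≤ a ^ k := by gcongr
end
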